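/- The Riemann hypothesis holds if and only if there exists a constant C > 0 such that for all real x ≥ 2, |π(x) − Li(x)| ≤ C·√x·log x (von Koch's theorem). -/

import Mathlib

/-- The prime counting function `π(x)`: the number of primes `p ≤ x`, as a real number. -/
noncomputable def primePi (x : ℝ) : ℝ :=
  (((Finset.range (⌊x⌋₊ + 1)).filter Nat.Prime).card : ℝ)

/-- The logarithmic integral `Li(x) = ∫₂^x dt / log t`. -/
noncomputable def Li (x : ℝ) : ℝ := ∫ t in (2:ℝ)..x, 1 / Real.log t

section

namespace VonKoch
open Real Set Filter Topology MeasureTheory intervalIntegral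

lemma primePi_eq (x : ℝ) : primePi x = (Nat.primeCounting ⌊x⌋₊ : ℝ) := by
  rw [primePi, Nat.primeCounting, Nat.primeCounting', Nat.count_eq_card_filter_range]

lemma log_ge_half {x : ℝ} (hx : 2 ≤ x) : 1 / 2 < Real.log x := by
  have := Real.log_two_gt_d9
  have h2 : Real.log 2 ≤ Real.log x := Real.log_le_log (by norm_num) hx
  linarith

lemma sqrt_ge_one {x : ℝ} (hx : 2 ≤ x) : 1 ≤ √x := by
  rw [Real.one_le_sqrt]; linarith

lemma cont_inv_log (x : ℝ) (hx : 2 ≤ x) :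
    ContinuousOn (fun t : ℝ => 1 / Real.log t) (uIcc 2 x) := by
  rw [uIcc_of_le hx]
  intro t ht
  have h := log_ge_half ht.1
  have h0 : t ≠ 0 := by linarith [ht.1]
  have h1 : Real.log t ≠ 0 := by linarith
  exact ContinuousAt.continuousWithinAt (by fun_prop (disch := assumption))

lemma Li_eq (x : ℝ) (hx : 2 ≤ x) :
    Li x = x / Real.log x - 2 / Real.log 2 + ∫ t in (2:ℝ)..x, 1 / Real.log t ^ 2 := by
  have h1 : IntervalIntegrable (fun t : ℝ => 1 / Real.log t) volume 2 x :=
    (cont_inv_log x hx).intervalIntegrable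
  have h2 := Chebyshev.intervalIntegrable_one_div_log_sq (a := 2) (b := x) (by norm_num)
    (by linarith)
  have h3 : ∫ t in (2:ℝ)..x, (1 / Real.log t - 1 / Real.log t ^ 2) =
      x / Real.log x - 2 / Real.log 2 := by
    apply integral_eq_sub_of_hasDerivAt (f := fun t => t / Real.log t) _ (h1.sub h2)
    intro t ht
    rw [uIcc_of_le hx] at ht
    have h := log_ge_half ht.1
    have h0 : t ≠ 0 := by linarith [ht.1]
    have h1 : Real.log t ≠ 0 := by linarith
    convert! (hasDerivAt_id t).div (Real.hasDerivAt_log h0) h1 using 1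
    field_simp; simp; ring
  rw [intervalIntegral.integral_sub h1 h2] at h3
  rw [Li]; linarith

lemma Li_hasDerivAt (x : ℝ) (hx : 2 < x) : HasDerivAt Li (1 / Real.log x) x := by
  have h1 : IntervalIntegrable (fun t : ℝ => 1 / Real.log t) volume 2 x :=
    (cont_inv_log x hx.le).intervalIntegrable
  have h := log_ge_half hx.le
  have h0 : x ≠ 0 := by linarith
  have h2 : Real.log x ≠ 0 := by linarith
  apply integral_hasDerivAt_right h1
  · apply Measurable.stronglyMeasurable _ |>.stronglyMeasurableAtFilter
    fun_prop
  · fun_prop (disch := assumption)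

lemma Li_cont (x : ℝ) (hx : 2 ≤ x) : ContinuousOn Li (Icc 2 x) := by
  have := continuousOn_primitive_interval' (μ := volume) (b₁ := 2) (b₂ := x) (a := 2)
    (cont_inv_log x hx).intervalIntegrable (by simp)
  rwa [uIcc_of_le hx] at this

lemma Li_div_int (x : ℝ) (hx : 2 ≤ x) :
    IntervalIntegrable (fun t => Li t / t) volume 2 x := by
  apply ContinuousOn.intervalIntegrable
  rw [uIcc_of_le hx]
  apply (Li_cont x hx).div continuousOn_id
  intro t ht; simp only [id]; linarith [ht.1]

lemma Li_parts (x : ℝ) (hx : 2 ≤ x) :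
    ∫ t in (2:ℝ)..x, Li t / t = Li x * Real.log x - (x - 2) := by
  have h3 : ∫ t in (2:ℝ)..x, Li t / t = (Li x * Real.log x - x) - (Li 2 * Real.log 2 - 2) := by
    apply integral_eq_sub_of_hasDeriv_right_of_le hx (f := fun t => Li t * Real.log t - t)
    · apply ContinuousOn.sub _ continuousOn_id
      apply (Li_cont x hx).mul
      intro t ht
      exact (Real.continuousAt_log (by linarith [ht.1])).continuousWithinAt
    · intro t ht
      have h := log_ge_half ht.1.le
      have h0 : t ≠ 0 := by linarith [ht.1]
      have h1 : Real.log t ≠ 0 := by linarith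
      apply HasDerivAt.hasDerivWithinAt
      convert! ((Li_hasDerivAt t ht.1).mul (Real.hasDerivAt_log h0)).sub (hasDerivAt_id t) using 1
      field_simp; simp
    · exact Li_div_int x hx
  rw [h3]; simp [Li]; ring

lemma inv_sqrt_int (x : ℝ) (hx : 2 ≤ x) :
    IntervalIntegrable (fun t => 1 / √t) volume 2 x := by
  apply ContinuousOn.intervalIntegrable
  rw [uIcc_of_le hx]
  apply continuousOn_const.div (by fun_prop)
  intro t ht
  have := sqrt_ge_one ht.1
  linarith

lemma integral_inv_sqrt (x : ℝ) (hx : 2 ≤ x) :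
    ∫ t in (2:ℝ)..x, 1 / √t ≤ 2 * √x := by
  have : ∫ t in (2:ℝ)..x, 1 / √t = 2 * √x - 2 * √2 := by
    apply integral_eq_sub_of_hasDerivAt (f := fun t => 2 * √t) _ (inv_sqrt_int x hx)
    intro t ht
    rw [uIcc_of_le hx] at ht
    have := sqrt_ge_one ht.1
    convert! (Real.hasDerivAt_sqrt (by linarith [ht.1] : t ≠ 0)).const_mul 2 using 1
    field_simp
  rw [this]; linarith [Real.sqrt_nonneg 2]

lemma vk_of_psi (h : ∃ C : ℝ, ∀ x : ℝ, 2 ≤ x →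
      |Chebyshev.psi x - x| ≤ C * √x * Real.log x ^ 2) :
    ∃ C : ℝ, 0 < C ∧ ∀ x : ℝ, 2 ≤ x → |primePi x - Li x| ≤ C * √x * Real.log x := by
  obtain ⟨C, hC⟩ := h
  have hth : ∀ x : ℝ, 2 ≤ x → |Chebyshev.theta x - x| ≤ (|C| + 4) * √x * Real.log x ^ 2 := by
    intro x hx
    have h1 := hC x hx
    have h2 := Chebyshev.abs_psi_sub_theta_le_sqrt_mul_log (x := x) (by linarith)
    have h3 := log_ge_half hx
    have h4 := sqrt_ge_one hx
    have h5 : C * √x * Real.log x ^ 2 ≤ |C| * √x * Real.log x ^ 2 := by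
      gcongr; exact le_abs_self C
    have h6 : 2 * √x * Real.log x ≤ 4 * √x * Real.log x ^ 2 := by
      have : 0 ≤ √x * Real.log x := by positivity
      nlinarith
    have h7 := abs_sub_le (Chebyshev.theta x) (Chebyshev.psi x) x
    rw [abs_sub_comm (Chebyshev.theta x) (Chebyshev.psi x)] at h7
    linarith
  refine ⟨3 * (|C| + 4) + 2 * (|C| + 4) + 12, by positivity, fun x hx => ?_⟩
  have hl := log_ge_half hx
  have hs := sqrt_ge_one hx
  have hlog2 := log_ge_half le_rfl
  have i1 : IntervalIntegrable (fun t => Chebyshev.theta t / (t * Real.log t ^ 2)) volume 2 x := by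
    rw [intervalIntegrable_iff_integrableOn_Icc_of_le hx]
    exact Chebyshev.integrableOn_theta_div_id_mul_log_sq x
  have i2 := Chebyshev.intervalIntegrable_one_div_log_sq (a := 2) (b := x) (by norm_num)
    (by linarith)
  have e : primePi x - Li x = (Chebyshev.theta x - x) / Real.log x + 2 / Real.log 2 +
      ∫ t in (2:ℝ)..x, (Chebyshev.theta t / (t * Real.log t ^ 2) - 1 / Real.log t ^ 2) := by
    rw [primePi_eq, Chebyshev.primeCounting_eq_theta_div_log_add_integral hx, Li_eq x hx,
      intervalIntegral.integral_sub i1 i2]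
    ring
  have b : ‖∫ t in (2:ℝ)..x, (Chebyshev.theta t / (t * Real.log t ^ 2) - 1 / Real.log t ^ 2)‖ ≤
      ∫ t in (2:ℝ)..x, (|C| + 4) * (1 / √t) := by
    apply norm_integral_le_of_norm_le hx
    · refine Filter.Eventually.of_forall fun t ht => ?_
      have ht2 : 2 ≤ t := ht.1.le
      have h1 := hth t ht2
      have h2 := log_ge_half ht2
      have h3 : 0 < t := by linarith
      have h4 : Chebyshev.theta t / (t * Real.log t ^ 2) - 1 / Real.log t ^ 2 =
        (Chebyshev.theta t - t) / (t * Real.log t ^ 2) := by field_simp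
      rw [h4, Real.norm_eq_abs, abs_div, abs_of_pos (by positivity : 0 < t * Real.log t ^ 2),
        div_le_iff₀ (by positivity)]
      refine h1.trans (le_of_eq ?_)
      have h5 : √t * √t = t := Real.mul_self_sqrt h3.le
      have h6 : √t ≠ 0 := by positivity
      field_simp
      rw [sq, h5]
    · exact (inv_sqrt_int x hx).const_mul _
  rw [intervalIntegral.integral_const_mul] at b
  have b2 := mul_le_mul_of_nonneg_left (integral_inv_sqrt x hx) (by positivity : 0 ≤ |C| + 4)
  rw [Real.norm_eq_abs] at b
  have b3 : |(Chebyshev.theta x - x) / Real.log x| ≤ (|C| + 4) * √x * Real.log x := by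
    rw [abs_div, abs_of_pos (by linarith : 0 < Real.log x), div_le_iff₀ (by linarith)]
    refine (hth x hx).trans (le_of_eq (by ring))
  have b4 : |2 / Real.log 2| ≤ 4 := by
    rw [abs_of_pos (by positivity), div_le_iff₀ (by linarith)]; linarith
  rw [e]
  have hp : √x ≤ 2 * (√x * Real.log x) := by nlinarith
  have hq : 1 ≤ 2 * (√x * Real.log x) := by linarith
  have hC0 := abs_nonneg C
  refine (abs_add_three _ _ _).trans ?_
  have : (|C| + 4) * √x ≤ (|C| + 4) * (2 * (√x * Real.log x)) := by gcongr
  nlinarith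

lemma psi_of_vk (h : ∃ C : ℝ, 0 < C ∧ ∀ x : ℝ, 2 ≤ x → |primePi x - Li x| ≤ C * √x * Real.log x) :
    ∃ C : ℝ, ∀ x : ℝ, 2 ≤ x → |Chebyshev.psi x - x| ≤ C * √x * Real.log x ^ 2 := by
  obtain ⟨C, hC0, hC⟩ := h
  refine ⟨C + 4 * C + 4 + 8, fun x hx => ?_⟩
  have hl := log_ge_half hx
  have hs := sqrt_ge_one hx
  have h2 := Chebyshev.abs_psi_sub_theta_le_sqrt_mul_log (x := x) (by linarith)
  have i1 : IntervalIntegrable (fun t => primePi t / t) volume 2 x := by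
    have : Monotone primePi := by
      intro a b hab
      rw [primePi_eq, primePi_eq]
      exact_mod_cast Nat.monotone_primeCounting (Nat.floor_mono hab)
    have h := this.intervalIntegrable (a := 2) (b := x) (μ := volume)
    simp_rw [div_eq_mul_inv]
    apply h.mul_continuousOn
    rw [uIcc_of_le hx]
    intro t ht
    exact (continuousAt_inv₀ (by linarith [ht.1])).continuousWithinAt
  have e : Chebyshev.theta x - x = (primePi x - Li x) * Real.log x - 2 -
      ∫ t in (2:ℝ)..x, (primePi t / t - Li t / t) := by
    rw [intervalIntegral.integral_sub i1 (Li_div_int x hx), Li_parts x hx,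
      Chebyshev.theta_eq_primeCounting_mul_log_sub_integral hx]
    simp_rw [primePi_eq]
    ring
  have b : ‖∫ t in (2:ℝ)..x, (primePi t / t - Li t / t)‖ ≤
      ∫ t in (2:ℝ)..x, (C * Real.log x) * (1 / √t) := by
    apply norm_integral_le_of_norm_le hx
    · refine Filter.Eventually.of_forall fun t ht => ?_
      have ht2 : 2 ≤ t := ht.1.le
      have h3 : 0 < t := by linarith
      have h1 := hC t ht2
      rw [← sub_div, Real.norm_eq_abs, abs_div, abs_of_pos h3, div_le_iff₀ h3]
      refine h1.trans ?_
      have h5 : √t * √t = t := Real.mul_self_sqrt h3.le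
      have h6 : 0 < √t := by positivity
      have h7 : C * Real.log x * (1 / √t) * t = C * √t * Real.log x := by
        field_simp; rw [sq, h5]
      rw [h7]
      have := Real.log_le_log h3 ht.2
      gcongr
    · exact (inv_sqrt_int x hx).const_mul _
  rw [intervalIntegral.integral_const_mul, Real.norm_eq_abs] at b
  have b2 := mul_le_mul_of_nonneg_left (integral_inv_sqrt x hx)
    (by positivity : 0 ≤ C * Real.log x)
  have b3 : |(primePi x - Li x) * Real.log x| ≤ C * (√x * Real.log x ^ 2) := by
    rw [abs_mul, abs_of_pos (by linarith : 0 < Real.log x)]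
    have := mul_le_mul_of_nonneg_right (hC x hx) (by linarith : 0 ≤ Real.log x)
    linarith
  have h7 := abs_add_le (Chebyshev.psi x - Chebyshev.theta x) (Chebyshev.theta x - x)
  rw [sub_add_sub_cancel] at h7
  have h8 : |Chebyshev.theta x - x| ≤ |(primePi x - Li x) * Real.log x| + 2 +
      |∫ t in (2:ℝ)..x, (primePi t / t - Li t / t)| := by
    rw [e]
    refine (abs_sub _ _).trans ?_
    gcongr
    refine (abs_sub _ _).trans ?_
    norm_num
  have p1 : √x * Real.log x ≤ 2 * (√x * Real.log x ^ 2) := by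
    have : 0 ≤ √x * Real.log x := by positivity
    nlinarith
  have p2 : 1 ≤ 2 * (√x * Real.log x) := by nlinarith
  have p3 := mul_le_mul_of_nonneg_left p1 hC0.le
  nlinarith

end VonKoch

end

section

open Complex Set MeasureTheory Filter Topology
namespace VonKoch

noncomputable def f0 : ℂ → ℂ := Function.update (fun s => (s - 1) * riemannZeta s) 1 1

lemma f0_one : f0 1 = 1 := by simp [f0]
lemma f0_of_ne {s : ℂ} (h : s ≠ 1) : f0 s = (s - 1) * riemannZeta s := by simp [f0, h]

lemma f0_diff : Differentiable ℂ f0 := by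
  rw [← differentiableOn_univ,
    ← differentiableOn_compl_singleton_and_continuousAt_iff (c := 1) Filter.univ_mem]
  refine ⟨fun s hs ↦ ?_, ?_⟩
  · have hs1 : s ≠ 1 := hs.2
    have : DifferentiableAt ℂ (fun s => (s - 1) * riemannZeta s) s :=
      (by fun_prop : DifferentiableAt ℂ (fun s : ℂ => s - 1) s).mul
        (differentiableAt_riemannZeta hs1)
    refine (this.congr_of_eventuallyEq ?_).differentiableWithinAt
    filter_upwards [eventually_ne_nhds hs1] with z hz using f0_of_ne hz
  · have := riemannZeta_residue_one
    rw [f0, continuousAt_update_same]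
    exact this

lemma H_loc {e : ℝ → ℂ} (he : Measurable e) {C a : ℝ} (hb : ∀ t > 1, ‖e t‖ ≤ C * t ^ a) :
    LocallyIntegrableOn ((Ioi (1:ℝ)).indicator e) (Ioi 0) := by
  have hC : 0 ≤ C := by
    have := (norm_nonneg _).trans (hb 2 (by norm_num))
    have h2 : (0:ℝ) < 2 ^ a := by positivity
    exact le_of_mul_le_mul_right (by simpa using this) h2
  have hg : LocallyIntegrableOn (fun t : ℝ => C * t ^ a) (Ioi 0) := by
    apply ContinuousOn.locallyIntegrableOn _ measurableSet_Ioi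
    apply ContinuousOn.mul continuousOn_const
    exact ContinuousOn.rpow_const continuousOn_id (fun x hx => Or.inl (ne_of_gt hx))
  refine hg.mono (he.indicator measurableSet_Ioi).aestronglyMeasurable ?_
  refine Eventually.of_forall fun t => ?_
  by_cases h : 1 < t
  · simp only [indicator, mem_Ioi, h, if_true]
    exact (hb t h).trans (Real.le_norm_self _)
  · simp [indicator, h]; positivity

lemma H_diff {e : ℝ → ℂ} (he : Measurable e) {C a : ℝ} (hb : ∀ t > 1, ‖e t‖ ≤ C * t ^ a)
    {s : ℂ} (hs : a < s.re) :
    DifferentiableAt ℂ (fun s : ℂ => ∫ t in Ioi (1:ℝ), e t * (t:ℂ) ^ (-(s + 1))) s := by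
  have key : (fun s : ℂ => ∫ t in Ioi (1:ℝ), e t * (t:ℂ) ^ (-(s + 1))) =
      fun s => mellin ((Ioi (1:ℝ)).indicator e) (-s) := by
    ext s
    rw [mellin, ← integral_indicator measurableSet_Ioi, ← integral_indicator measurableSet_Ioi]
    congr 1
    ext t
    by_cases h : 1 < t
    · have h0 : 0 < t := by linarith
      simp only [indicator, mem_Ioi, h, h0, if_true, smul_eq_mul]
      rw [mul_comm]; congr 2; ring
    · simp [indicator, h]
  rw [key]
  have h1 : DifferentiableAt ℂ (mellin ((Ioi (1:ℝ)).indicator e)) (-s) := by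
    apply mellin_differentiableAt_of_isBigO_rpow (a := -a) (b := -s.re - 1) (H_loc he hb)
    · apply Asymptotics.IsBigO.of_bound C
      filter_upwards [eventually_gt_atTop 1] with t ht
      simp only [indicator, mem_Ioi, ht, if_true, neg_neg]
      rw [Real.norm_of_nonneg (by positivity)]
      exact hb t ht
    · simpa using hs
    · have : (Ioi (1:ℝ)).indicator e =ᶠ[𝓝[>] 0] 0 := by
        filter_upwards [nhdsWithin_le_nhds (Iio_mem_nhds (by norm_num : (0:ℝ) < 1))] with t ht
        have ht : t < 1 := ht
        simp [indicator, not_lt.2 ht.le]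
      exact this.trans_isBigO (Asymptotics.isBigO_zero _ _)
    · simp
  exact h1.comp s (differentiable_neg s)

lemma H_int {e : ℝ → ℂ} (he : Measurable e) {C a : ℝ} (hb : ∀ t > 1, ‖e t‖ ≤ C * t ^ a)
    {s : ℂ} (hs : a < s.re) : IntegrableOn (fun t : ℝ => e t * (t:ℂ) ^ (-(s + 1))) (Ioi 1) ∧
    ‖∫ t in Ioi (1:ℝ), e t * (t:ℂ) ^ (-(s + 1))‖ ≤ C / (s.re - a) := by
  have hi : IntegrableOn (fun t : ℝ => C * t ^ (a - s.re - 1)) (Ioi 1) :=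
    (integrableOn_Ioi_rpow_of_lt (by linarith) zero_lt_one).const_mul C
  have hle : ∀ t ∈ Ioi (1:ℝ), ‖e t * (t:ℂ) ^ (-(s + 1))‖ ≤ C * t ^ (a - s.re - 1) := by
    intro t ht
    have ht : 1 < t := ht
    rw [norm_mul, Complex.norm_cpow_eq_rpow_re_of_pos (by linarith)]
    calc _ ≤ C * t ^ a * t ^ (-(s+1)).re := by gcongr; exact hb t ht
      _ = _ := by rw [mul_assoc, ← Real.rpow_add (by linarith)]; congr 2; simp; ring
  have hae : ∀ᵐ t ∂(volume.restrict (Ioi (1:ℝ))), ‖e t * (t:ℂ) ^ (-(s + 1))‖ ≤ C * t ^ (a - s.re - 1) :=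
    (ae_restrict_iff' measurableSet_Ioi).2 (Eventually.of_forall hle)
  refine ⟨hi.mono' ?_ hae, ?_⟩
  · exact (he.mul (by fun_prop)).aestronglyMeasurable
  · refine (norm_integral_le_of_norm_le hi hae).trans (le_of_eq ?_)
    rw [integral_const_mul, integral_Ioi_rpow_of_lt (by linarith) zero_lt_one]
    rw [Real.one_rpow, mul_div_assoc']
    rw [← neg_div_neg_eq]; simp

lemma int_t {s : ℂ} (hs : 1 < s.re) : IntegrableOn (fun t : ℝ => (t:ℂ) * (t:ℂ) ^ (-(s + 1))) (Ioi 1) ∧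
    ∫ t in Ioi (1:ℝ), (t:ℂ) * (t:ℂ) ^ (-(s + 1)) = 1 / (s - 1) := by
  have h : EqOn (fun t : ℝ => (t:ℂ) ^ (-s)) (fun t : ℝ => (t:ℂ) * (t:ℂ) ^ (-(s + 1))) (Ioi 1) := by
    intro t ht
    have ht : 1 < t := ht
    have h0 : (t:ℂ) ≠ 0 := by exact_mod_cast (by linarith : t ≠ 0)
    show _ = (t:ℂ) * (t:ℂ) ^ (-(s + 1))
    have := Complex.cpow_add 1 (-(s+1)) h0
    rw [Complex.cpow_one] at this
    rw [← this]; show (t:ℂ) ^ (-s) = _; congr 1; ring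
  constructor
  · exact (integrableOn_Ioi_cpow_of_lt (by simpa using hs) zero_lt_one).congr_fun h measurableSet_Ioi
  · rw [← setIntegral_congr_fun measurableSet_Ioi h, integral_Ioi_cpow_of_lt (by simpa using hs) zero_lt_one]
    simp
    rw [← neg_div_neg_eq]; simp; congr 1; ring


lemma halfplane_identity {a b : ℝ} {F G : ℂ → ℂ} (hF : ∀ s : ℂ, a < s.re → DifferentiableAt ℂ F s)
    (hG : ∀ s : ℂ, a < s.re → DifferentiableAt ℂ G s) (h : ∀ s : ℂ, b < s.re → F s = G s) :
    ∀ s : ℂ, a < s.re → F s = G s := by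
  have ho : IsOpen {s : ℂ | a < s.re} := isOpen_lt continuous_const continuous_re
  have hF' : AnalyticOnNhd ℂ F {s : ℂ | a < s.re} :=
    (show DifferentiableOn ℂ F _ from fun s hs => (hF s hs).differentiableWithinAt).analyticOnNhd ho
  have hG' : AnalyticOnNhd ℂ G {s : ℂ | a < s.re} :=
    (show DifferentiableOn ℂ G _ from fun s hs => (hG s hs).differentiableWithinAt).analyticOnNhd ho
  have hp : IsPreconnected {s : ℂ | a < s.re} := (convex_halfSpace_re_gt a).isPreconnected
  have ho' : IsOpen {s : ℂ | b < s.re} := isOpen_lt continuous_const continuous_re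
  have hz : ((max a b + 1 : ℝ) : ℂ) ∈ {s : ℂ | a < s.re} := by
    simp; linarith [le_max_left a b]
  have hz' : ((max a b + 1 : ℝ) : ℂ) ∈ {s : ℂ | b < s.re} := by
    simp; linarith [le_max_right a b]
  exact hF'.eqOn_of_preconnected_of_eventuallyEq hG' hp hz
    (by filter_upwards [ho'.mem_nhds hz'] with s hs using h s hs)

lemma fr_meas : Measurable (fun t : ℝ => ((t - ⌊t⌋₊ : ℝ) : ℂ)) := by
  have : Measurable (fun t : ℝ => (⌊t⌋₊ : ℝ)) := by fun_prop
  fun_prop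

lemma fr_bound : ∀ t : ℝ, t > 1 → ‖((t - ⌊t⌋₊ : ℝ) : ℂ)‖ ≤ 1 * t ^ (0:ℝ) := by
  intro t ht
  have h1 := Nat.floor_le (by linarith : 0 ≤ t)
  have h2 := Nat.lt_floor_add_one t
  rw [Complex.norm_real, Real.norm_eq_abs, abs_le, Real.rpow_zero]
  constructor <;> linarith

noncomputable def HH (e : ℝ → ℂ) (s : ℂ) : ℂ := ∫ t in Ioi (1:ℝ), e t * (t:ℂ) ^ (-(s + 1))

lemma f0_rep1 {s : ℂ} (hs : 1 < s.re) :
    f0 s = s - s * (s - 1) * HH (fun t : ℝ => ((t - ⌊t⌋₊ : ℝ) : ℂ)) s := by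
  have hs1 : s ≠ 1 := by rintro rfl; simp at hs
  have hs1' : s - 1 ≠ 0 := sub_ne_zero.2 hs1
  rw [f0_of_ne hs1, ← LSeries_one_eq_riemannZeta hs]
  have h := LSeries_eq_mul_integral' 1 (r := 1) zero_le_one hs (by
    simp only [Pi.one_apply, norm_one, Finset.sum_const, Nat.card_Icc]
    simpa using Asymptotics.isBigO_refl _ _)
  rw [h]
  have h2 : ∫ t in Ioi (1:ℝ), (∑ k ∈ Finset.Icc 1 ⌊t⌋₊, (1 : ℕ → ℂ) k) * (t:ℂ) ^ (-(s + 1)) =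
      1 / (s - 1) - HH (fun t : ℝ => ((t - ⌊t⌋₊ : ℝ) : ℂ)) s := by
    rw [HH, ← (int_t hs).2, ← integral_sub (int_t hs).1
      (H_int fr_meas fr_bound (by linarith : (0:ℝ) < s.re)).1]
    congr 1; ext t
    simp; ring
  rw [h2]; field_simp

lemma f0_bound {s : ℂ} (hs : 1 / 10 ≤ s.re) : ‖f0 s‖ ≤ 11 * (‖s‖ + 1) ^ 2 := by
  have hs' : (0:ℝ) < s.re := by linarith
  have h := halfplane_identity (a := 0) (b := 1) (F := f0)
    (G := fun s => s - s * (s - 1) * HH (fun t : ℝ => ((t - ⌊t⌋₊ : ℝ) : ℂ)) s)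
    (fun s _ => f0_diff s) (fun s hs => by
      have := H_diff fr_meas fr_bound hs
      have h2 : DifferentiableAt ℂ (HH (fun t : ℝ => ((t - ⌊t⌋₊ : ℝ) : ℂ))) s := this
      fun_prop) (fun s hs => f0_rep1 hs) s hs'
  rw [h]
  have h3 : ‖HH (fun t : ℝ => ((t - ⌊t⌋₊ : ℝ) : ℂ)) s‖ ≤ 10 := by
    refine (H_int fr_meas fr_bound hs').2.trans ?_
    rw [div_le_iff₀ (by linarith)]; linarith
  calc _ ≤ ‖s‖ + ‖s‖ * ‖s - 1‖ * ‖HH (fun t : ℝ => ((t - ⌊t⌋₊ : ℝ) : ℂ)) s‖ := by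
        refine (norm_sub_le _ _).trans ?_
        rw [norm_mul, norm_mul]
    _ ≤ ‖s‖ + ‖s‖ * (‖s‖ + 1) * 10 := by
        gcongr
        refine (norm_sub_le _ _).trans ?_
        simp
    _ ≤ _ := by nlinarith [norm_nonneg s]

lemma f0_logDeriv {s : ℂ} (hs : 1 < s.re) : f0 s ≠ 0 ∧
    deriv f0 s / f0 s = 1 / (s - 1) - LSeries (fun n => (ArithmeticFunction.vonMangoldt n : ℂ)) s := by
  have hs1 : s ≠ 1 := by rintro rfl; simp at hs
  have hs1' : s - 1 ≠ 0 := sub_ne_zero.2 hs1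
  have hz : riemannZeta s ≠ 0 := riemannZeta_ne_zero_of_one_le_re hs.le
  refine ⟨by rw [f0_of_ne hs1]; exact mul_ne_zero hs1' hz, ?_⟩
  have hd : deriv f0 s = riemannZeta s + (s - 1) * deriv riemannZeta s := by
    have : f0 =ᶠ[𝓝 s] fun s => (s - 1) * riemannZeta s := by
      filter_upwards [eventually_ne_nhds hs1] with z hz using f0_of_ne hz
    rw [this.deriv_eq, deriv_fun_mul (by fun_prop) (differentiableAt_riemannZeta hs1)]
    simp
  rw [hd, f0_of_ne hs1, ArithmeticFunction.LSeries_vonMangoldt_eq_deriv_riemannZeta_div hs]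
  field_simp
  ring

end VonKoch

end

section

open Complex Set MeasureTheory Filter Topology
namespace VonKoch

lemma psi_meas : Measurable (fun t : ℝ => ((Chebyshev.psi t - t : ℝ) : ℂ)) := by
  have : Measurable Chebyshev.psi := Chebyshev.psi_mono.measurable
  fun_prop

lemma psi_rep {s : ℂ} (hs : 1 < s.re)
    {C a : ℝ} (ha : a ≤ 1) (hb : ∀ t > 1, ‖((Chebyshev.psi t - t : ℝ) : ℂ)‖ ≤ C * t ^ a) :
    LSeries (fun n => (ArithmeticFunction.vonMangoldt n : ℂ)) s =
      s / (s - 1) + s * HH (fun t : ℝ => ((Chebyshev.psi t - t : ℝ) : ℂ)) s := by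
  have hs1 : s ≠ 1 := by rintro rfl; simp at hs
  have hs1' : s - 1 ≠ 0 := sub_ne_zero.2 hs1
  have hpsi : ∀ t : ℝ, ∑ k ∈ Finset.Icc 1 ⌊t⌋₊, ArithmeticFunction.vonMangoldt k = Chebyshev.psi t := by
    intro t; rfl
  have h := LSeries_eq_mul_integral_of_nonneg (fun n => ArithmeticFunction.vonMangoldt n) (r := 1)
    zero_le_one hs (by
      apply Asymptotics.IsBigO.of_bound (Real.log 4 + 4)
      refine Eventually.of_forall fun n => ?_
      have h1 := hpsi n
      rw [Nat.floor_natCast] at h1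
      rw [h1, Real.rpow_one, Real.norm_of_nonneg (Chebyshev.psi_nonneg _), Real.norm_of_nonneg (by positivity)]
      exact Chebyshev.psi_le_const_mul_self (by positivity))
    (fun n => ArithmeticFunction.vonMangoldt_nonneg)
  rw [h]
  have h2 : ∫ t in Ioi (1:ℝ), (∑ k ∈ Finset.Icc 1 ⌊t⌋₊, (ArithmeticFunction.vonMangoldt k : ℂ)) * (t:ℂ) ^ (-(s + 1)) =
      1 / (s - 1) + HH (fun t : ℝ => ((Chebyshev.psi t - t : ℝ) : ℂ)) s := by
    rw [HH, ← (int_t hs).2, ← integral_add (int_t hs).1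
      (H_int psi_meas hb (by linarith : a < s.re)).1]
    congr 1; ext t
    rw [← hpsi t]
    push_cast; ring
  rw [h2]; field_simp

lemma psi_pow_bound (h : ∃ C, ∀ x ≥ 2, |Chebyshev.psi x - x| ≤ C * √x * Real.log x ^ 2) {a : ℝ}
    (ha : 1 / 2 < a) : ∃ C, ∀ t > 1, ‖((Chebyshev.psi t - t : ℝ) : ℂ)‖ ≤ C * t ^ a := by
  obtain ⟨C, hC⟩ := h
  set ε := (a - 1 / 2) / 2 with hε
  have he : 0 < ε := by rw [hε]; linarith
  refine ⟨|C| / ε ^ 2 + 2, fun t ht => ?_⟩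
  have ht0 : 0 < t := by linarith
  rw [Complex.norm_real, Real.norm_eq_abs]
  have h1 : (1:ℝ) ≤ t ^ a := Real.one_le_rpow ht.le (by linarith)
  by_cases h2 : 2 ≤ t
  · have h3 := Real.log_le_rpow_div ht0.le he
    have h4 : 0 ≤ Real.log t := Real.log_nonneg ht.le
    calc _ ≤ C * √t * Real.log t ^ 2 := hC t h2
      _ ≤ |C| * √t * (t ^ ε / ε) ^ 2 := by gcongr; exact le_abs_self C
      _ = |C| / ε ^ 2 * t ^ a := by
        have : t ^ a = √t * (t ^ ε) ^ 2 := by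
          rw [Real.sqrt_eq_rpow, ← Real.rpow_natCast, ← Real.rpow_mul ht0.le, ← Real.rpow_add ht0]
          congr 1; push_cast; rw [hε]; ring
        rw [this]; field_simp
      _ ≤ _ := by rw [add_mul]; linarith
  · push Not at h2
    rw [Chebyshev.psi_eq_zero_of_lt_two h2, zero_sub, abs_neg, abs_of_pos ht0, add_mul]
    have : 0 ≤ |C| / ε ^ 2 * t ^ a := by positivity
    linarith

lemma f0_ne_zero_of_psi (h : ∃ C, ∀ x ≥ 2, |Chebyshev.psi x - x| ≤ C * √x * Real.log x ^ 2)
    {ρ : ℂ} (hρ : 1 / 2 < ρ.re) : f0 ρ ≠ 0 := by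
  intro h0
  obtain ⟨a, ha, ha'⟩ := exists_between (lt_min hρ (by norm_num : (1/2:ℝ) < 1))
  have haρ : a < ρ.re := ha'.trans_le (min_le_left _ _)
  have ha1 : a ≤ 1 := (ha'.trans_le (min_le_right _ _)).le
  obtain ⟨C, hC⟩ := psi_pow_bound h ha
  set k : ℂ → ℂ := fun s => -(1 + s * HH (fun t : ℝ => ((Chebyshev.psi t - t : ℝ) : ℂ)) s) with hk
  have hkd : ∀ s : ℂ, a < s.re → DifferentiableAt ℂ k s := by
    intro s hs
    have : DifferentiableAt ℂ (HH (fun t : ℝ => ((Chebyshev.psi t - t : ℝ) : ℂ))) s := H_diff psi_meas hC hs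
    fun_prop
  have hdd : Differentiable ℂ (deriv f0) := (f0_diff.contDiff (n := 2)).differentiable_deriv_two
  have hid : ∀ s : ℂ, a < s.re → deriv f0 s = (k * f0) s := by
    refine halfplane_identity (b := 1) (fun s _ => hdd s)
      (fun s hs => (hkd s hs).mul (f0_diff s)) (fun s hs => ?_)
    have hs1 : s ≠ 1 := by rintro rfl; simp at hs
    have hs1' : s - 1 ≠ 0 := sub_ne_zero.2 hs1
    obtain ⟨h1, h2⟩ := f0_logDeriv hs
    rw [psi_rep hs ha1 hC, div_eq_iff h1] at h2
    rw [h2, Pi.mul_apply, hk]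
    congr 1
    field_simp
    ring
  have ho : IsOpen {s : ℂ | a < s.re} := isOpen_lt continuous_const continuous_re
  have hev : deriv f0 =ᶠ[𝓝 ρ] k * f0 := by
    filter_upwards [ho.mem_nhds haρ] with s hs using hid s hs
  have hf : AnalyticAt ℂ f0 ρ := f0_diff.analyticAt ρ
  have hka : AnalyticAt ℂ k ρ :=
    (show DifferentiableOn ℂ k {s : ℂ | a < s.re} from
      fun s hs => (hkd s hs).differentiableWithinAt).analyticAt (ho.mem_nhds haρ)
  have h1 := hf.analyticOrderAt_deriv_add_one
  rw [analyticOrderAt_congr hev, analyticOrderAt_mul hka hf, h0] at h1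
  simp only [sub_zero] at h1
  have htop : analyticOrderAt f0 ρ = ⊤ := by
    by_contra hne
    have : analyticOrderAt f0 ρ + 1 ≤ analyticOrderAt f0 ρ := by
      nth_rw 2 [← h1]
      gcongr
      exact le_add_self
    lift analyticOrderAt f0 ρ to ℕ using hne with m
    norm_cast at this
    omega
  rw [analyticOrderAt_eq_top] at htop
  have hall := (show AnalyticOnNhd ℂ f0 univ from fun z _ => f0_diff.analyticAt z).eqOn_of_preconnected_of_eventuallyEq
    (g := 0) (fun z _ => analyticAt_const) isPreconnected_univ (mem_univ ρ) htop
  have := hall (mem_univ 1)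
  rw [f0_one] at this
  simp at this

lemma rh_of_psi (h : ∃ C, ∀ x ≥ 2, |Chebyshev.psi x - x| ≤ C * √x * Real.log x ^ 2) :
    RiemannHypothesis := by
  have hle : ∀ s : ℂ, riemannZeta s = 0 → s ≠ 1 → s.re ≤ 1 / 2 := by
    intro s hs hs1
    by_contra! hc
    exact f0_ne_zero_of_psi h hc (by rw [f0_of_ne hs1, hs, mul_zero])
  intro s hs htriv hs1
  refine le_antisymm (hle s hs hs1) ?_
  by_contra! hc
  by_cases hn : ∀ n : ℕ, s ≠ -n
  · have h1 := riemannZeta_one_sub hn hs1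
    rw [hs, mul_zero] at h1
    have h2 := hle _ h1 (by
      intro h; have : s = 0 := by linear_combination -h
      exact hn 0 (by simp [this]))
    simp at h2
    linarith
  · push Not at hn
    obtain ⟨n, rfl⟩ := hn
    rcases Nat.even_or_odd' n with ⟨k, hk | hk⟩
    · rcases k with _ | k
      · subst hk
        simp [riemannZeta_zero] at hs
      · exact htriv ⟨k, by rw [hk]; push_cast; ring⟩
    · have hne : ∀ m : ℕ, (n + 1 : ℂ) ≠ -m := by
        intro m hm
        have : ((n + 1 + m : ℕ) : ℂ) = 0 := by push_cast; rw [hm]; ring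
        norm_cast at this
        omega
      have h1 := riemannZeta_one_sub (s := n + 1) hne (by
        intro h; have : (n:ℂ) = 0 := by linear_combination h
        norm_cast at this; omega)
      rw [show (1:ℂ) - (n + 1) = -n by ring, hs] at h1
      have h2 : riemannZeta (n + 1) ≠ 0 := riemannZeta_ne_zero_of_one_le_re (by simp)
      have h3 : Gamma (n + 1) ≠ 0 := Gamma_ne_zero hne
      have h4 : Complex.cos (Real.pi * (n + 1) / 2) ≠ 0 := by
        rw [show (Real.pi * (n + 1) / 2 : ℂ) = ((k + 1 : ℕ) : ℂ) * Real.pi by rw [hk]; push_cast; ring,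
          ← Complex.ofReal_natCast, ← Complex.ofReal_mul, ← Complex.ofReal_cos, Real.cos_nat_mul_pi]
        exact Complex.ofReal_ne_zero.2 (pow_ne_zero _ (by norm_num))
      have h5 : (2 * (Real.pi:ℂ)) ^ (-((n:ℂ) + 1)) ≠ 0 := by
        rw [Ne, Complex.cpow_eq_zero_iff]
        simp [Real.pi_ne_zero]
      simp_all
end VonKoch

end

section

namespace VonKoch
open Complex Set Filter Topology Metric ComplexConjugate

lemma logDeriv_bound {G : ℂ → ℂ} (hG : Differentiable ℂ G) {R1 r B : ℝ} (hr : 0 < r)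
    (hrR : r < R1) (hB : 0 < B) (hne : ∀ z, ‖z‖ < R1 → G z ≠ 0)
    (hb : ∀ z, ‖z‖ < R1 → ‖G z‖ ≤ ‖G 0‖ * Real.exp B) (z : ℂ) (hz : ‖z‖ ≤ r) :
    ‖deriv G z / G z‖ ≤ (4 * (R1 + r) / (R1 - r) ^ 2) * B := by
  have hR1 : 0 < R1 := hr.trans hrR
  have hd : DifferentiableOn ℂ (fun z => deriv G z / G z) (ball 0 R1) := by
    intro w hw
    have hw' : G w ≠ 0 := hne w (by simpa using hw)
    have : DifferentiableAt ℂ (deriv G) w :=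
      (hG.contDiff (n := 2)).differentiable_deriv_two w
    exact (this.div (hG w) hw').differentiableWithinAt
  obtain ⟨L0, hL0⟩ := hd.isExactOn_ball
  set L : ℂ → ℂ := fun w => L0 w - L0 0 with hLdef
  have hL : ∀ w ∈ ball (0:ℂ) R1, HasDerivAt L (deriv G w / G w) w := fun w hw =>
    (hL0 w hw).sub_const _
  have hLz : L 0 = 0 := by simp [hLdef]
  have hLd : DifferentiableOn ℂ L (ball 0 R1) := fun w hw =>
    (hL w hw).differentiableAt.differentiableWithinAt
  -- G = G 0 * exp L
  have hconst : ∀ w ∈ ball (0:ℂ) R1, G w * exp (-L w) = G 0 := by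
    intro w hw
    have hder : ∀ w ∈ ball (0:ℂ) R1, HasDerivAt (fun w => G w * exp (-L w)) 0 w := by
      intro w hw
      have hw' : G w ≠ 0 := hne w (by simpa using hw)
      convert! (hG w).hasDerivAt.mul ((hL w hw).neg.cexp) using 1
      field_simp; ring
    have h := (convex_ball (0:ℂ) R1).norm_image_sub_le_of_norm_hasDerivWithin_le
      (f := fun w => G w * exp (-L w)) (f' := fun _ => 0) (C := 0)
      (fun x hx => (hder x hx).hasDerivWithinAt) (by simp) (mem_ball_self hR1) hw
    simp only [zero_mul, norm_le_zero_iff, sub_eq_zero] at h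
    rw [h]; simp [hLz]
  have hG0 : 0 < ‖G 0‖ := by
    rw [norm_pos_iff]; exact hne 0 (by simpa using hR1)
  have hre : MapsTo L (ball 0 R1) {z | z.re ≤ B} := by
    intro w hw
    have h1 := hconst w hw
    have h2 : ‖G w‖ * Real.exp (-(L w).re) = ‖G 0‖ := by
      rw [← h1, norm_mul, Complex.norm_exp]; simp
    have h3 := hb w (by simpa using hw)
    have h4 : ‖G 0‖ ≤ ‖G 0‖ * Real.exp (B - (L w).re) := by
      rw [sub_eq_add_neg, Real.exp_add, ← mul_assoc]
      conv_lhs => rw [← h2]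
      gcongr
    have h5 : 1 ≤ Real.exp (B - (L w).re) := by
      by_contra hcon
      push Not at hcon
      nlinarith
    have := Real.one_le_exp_iff.1 h5
    show (L w).re ≤ B
    linarith
  set d := (R1 - r) / 2 with hddef
  have hdpos : 0 < d := by rw [hddef]; linarith
  have hsub : ∀ w, w ∈ closedBall z d → w ∈ ball (0:ℂ) R1 ∧ ‖w‖ ≤ r + d := by
    intro w hw
    have h1 : ‖w - z‖ ≤ d := by simpa [dist_eq_norm] using hw
    have h2 : ‖w‖ ≤ r + d := by
      calc ‖w‖ = ‖z + (w - z)‖ := by ring_nf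
        _ ≤ ‖z‖ + ‖w - z‖ := norm_add_le _ _
        _ ≤ _ := by linarith
    refine ⟨?_, h2⟩
    simp only [mem_ball, dist_zero_right]
    have : r + d < R1 := by rw [hddef]; linarith
    linarith
  have key : ‖deriv L z‖ ≤ (2 * B * (r + d) / (R1 - (r + d))) / d := by
    apply norm_deriv_le_of_forall_mem_sphere_norm_le hdpos
    · apply DifferentiableOn.diffContOnCl
      rw [closure_ball _ hdpos.ne']
      exact hLd.mono fun w hw => (hsub w hw).1
    · intro w hw
      obtain ⟨h1, h2⟩ := hsub w (sphere_subset_closedBall hw)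
      refine (borelCaratheodory_zero hB hLd hre hR1 h1 hLz).trans ?_
      have : r + d < R1 := by rw [hddef]; linarith
      gcongr
  have hzb : z ∈ ball (0:ℂ) R1 := by simpa using lt_of_le_of_lt hz hrR
  rw [(hL z hzb).deriv] at key
  refine key.trans (le_of_eq ?_)
  have : R1 - r ≠ 0 := by linarith
  rw [hddef]
  have h2 : R1 - (r + (R1 - r) / 2) = (R1 - r) / 2 := by ring
  rw [h2]
  field_simp; ring

lemma blaschke_bound {f g : ℂ → ℂ} (hg : Differentiable ℂ g) {R1 R M : ℝ} (hR1 : 0 < R1)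
    (hR : R1 < R) (hM : ∀ z, ‖z‖ ≤ R → ‖f z‖ ≤ M) {n : ℕ} (ρ : Fin n → ℂ)
    (hρ : ∀ i, ‖ρ i‖ ≤ R1) (hfac : ∀ z, f z = (∏ i, (z - ρ i)) * g z) :
    (∀ z, ‖z‖ ≤ R → ‖g z * ∏ i, ((R ^ 2 - conj (ρ i) * z) / R)‖ ≤ M) ∧
    ‖f 0‖ * (R / R1) ^ n ≤ ‖g 0 * ∏ i, ((R ^ 2 - conj (ρ i) * 0) / R)‖ := by
  have hRpos : 0 < R := hR1.trans hR
  constructor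
  · intro z hz
    have hd : Differentiable ℂ (fun z => g z * ∏ i, ((R ^ 2 - conj (ρ i) * z) / R)) := by
      fun_prop
    refine norm_le_of_forall_mem_frontier_norm_le (U := ball 0 R) isBounded_ball
      hd.diffContOnCl ?_ (by rw [closure_ball _ hRpos.ne']; simpa using hz)
    intro w hw
    rw [frontier_ball _ hRpos.ne'] at hw
    have hw' : ‖w‖ = R := by simpa using hw
    have : ‖g w * ∏ i, ((R ^ 2 - conj (ρ i) * w) / R)‖ = ‖f w‖ := by
      rw [hfac w, norm_mul, norm_mul, mul_comm, norm_prod, norm_prod]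
      congr 1
      apply Finset.prod_congr rfl
      intro i _
      have h1 : ((R:ℂ) ^ 2 - conj (ρ i) * w) = w * conj (w - ρ i) := by
        rw [map_sub, mul_sub, Complex.mul_conj, Complex.normSq_eq_norm_sq, hw']
        push_cast; ring
      rw [h1, norm_div, norm_mul, hw', Complex.norm_conj]
      simp [abs_of_pos hRpos]
      field_simp
    rw [this]
    exact hM w hw'.le
  · rw [hfac 0, norm_mul, norm_mul, norm_prod, norm_prod]
    have h1 : ∏ i, ‖(0 - ρ i)‖ ≤ R1 ^ n := by
      calc ∏ i, ‖(0 - ρ i)‖ ≤ ∏ i : Fin n, R1 := by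
            apply Finset.prod_le_prod
            · intros; positivity
            · intro i _; simpa using hρ i
        _ = R1 ^ n := by simp
    have h2 : ∏ i, ‖((R:ℂ) ^ 2 - conj (ρ i) * 0) / R‖ = R ^ n := by
      have : ∀ i : Fin n, ‖((R:ℂ) ^ 2 - conj (ρ i) * 0) / R‖ = R := by
        intro i; simp [abs_of_pos hRpos]; field_simp
      rw [Finset.prod_congr rfl (fun i _ => this i)]; simp
    rw [h2]
    calc (∏ i, ‖(0 - ρ i)‖) * ‖g 0‖ * (R / R1) ^ n ≤ R1 ^ n * ‖g 0‖ * (R / R1) ^ n := by gcongr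
      _ = ‖g 0‖ * R ^ n := by rw [div_pow]; field_simp

lemma exists_factor {f : ℂ → ℂ} (hf : Differentiable ℂ f) (h0 : f 0 ≠ 0) {R1 R M : ℝ}
    (hR1 : 0 < R1) (hR : R1 < R) (hM : ∀ z, ‖z‖ ≤ R → ‖f z‖ ≤ M) :
    ∃ (n : ℕ) (ρ : Fin n → ℂ) (g : ℂ → ℂ), Differentiable ℂ g ∧ (∀ i, ‖ρ i‖ ≤ R1) ∧
      (∀ z, f z = (∏ i, (z - ρ i)) * g z) ∧ ∀ z, ‖z‖ ≤ R1 → g z ≠ 0 := by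
  let P : ℕ → Prop := fun n => ∃ (ρ : Fin n → ℂ) (g : ℂ → ℂ), Differentiable ℂ g ∧
    (∀ i, ‖ρ i‖ ≤ R1) ∧ (∀ z, f z = (∏ i, (z - ρ i)) * g z)
  have hP0 : P 0 := ⟨Fin.elim0, f, hf, fun i => i.elim0, by simp⟩
  have hRR : 1 < R / R1 := by rw [lt_div_iff₀ hR1]; linarith
  obtain ⟨N, hN⟩ := pow_unbounded_of_one_lt (M / ‖f 0‖) hRR
  have hfp : 0 < ‖f 0‖ := by positivity
  have hbd : ∀ n, P n → n ≤ N := by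
    rintro n ⟨ρ, g, hg, hρ, hfac⟩
    by_contra hcon
    push Not at hcon
    obtain ⟨h1, h2⟩ := blaschke_bound hg hR1 hR hM ρ hρ hfac
    have h3 := h1 0 (by simp; linarith)
    have h4 : (R / R1) ^ N ≤ (R / R1) ^ n := pow_le_pow_right₀ hRR.le hcon.le
    rw [div_lt_iff₀ hfp] at hN
    nlinarith
  classical
  have hmax := Nat.findGreatest_spec (P := P) (Nat.zero_le N) hP0
  set n := Nat.findGreatest P N with hn
  obtain ⟨ρ, g, hg, hρ, hfac⟩ := hmax
  refine ⟨n, ρ, g, hg, hρ, hfac, fun z hz hgz => ?_⟩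
  have hP : P (n + 1) := by
    refine ⟨Fin.cons z ρ, dslope g z, ?_, ?_, ?_⟩
    · rw [← differentiableOn_univ] at hg ⊢
      exact (differentiableOn_dslope univ_mem).2 hg
    · intro i
      refine Fin.cases ?_ (fun j => ?_) i
      · simpa using hz
      · simpa using hρ j
    · intro w
      rw [hfac w, Fin.prod_univ_succ]
      have : (w - z) * dslope g z w = g w := by
        have := sub_smul_dslope g z w
        rw [smul_eq_mul, hgz, sub_zero] at this
        exact this
      simp only [Fin.cons_zero, Fin.cons_succ]
      rw [← this]; ring
  have := Nat.le_findGreatest (hbd _ hP) hP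
  omega

/-- Landau's lemma -/
lemma landau {R1 R r : ℝ} (hr : 0 < r) (hrR : r < R1) (hR : R1 < R) :
    ∃ c : ℝ, 0 < c ∧ ∀ (f : ℂ → ℂ), Differentiable ℂ f → f 0 ≠ 0 → ∀ B : ℝ, 0 < B →
      (∀ z, ‖z‖ ≤ R → ‖f z‖ ≤ ‖f 0‖ * Real.exp B) →
      ∃ (n : ℕ) (ρ : Fin n → ℂ), (n : ℝ) ≤ c * B ∧ (∀ i, ‖ρ i‖ ≤ R1 ∧ f (ρ i) = 0) ∧
        ∀ z, ‖z‖ ≤ r → f z ≠ 0 → ‖deriv f z / f z - ∑ i, 1 / (z - ρ i)‖ ≤ c * B := by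
  have hR1 : 0 < R1 := hr.trans hrR
  have hRp : 0 < R := hR1.trans hR
  have hRR : 1 < R / R1 := by rw [lt_div_iff₀ hR1]; linarith
  have hlog : 0 < Real.log (R / R1) := Real.log_pos hRR
  set c1 := 1 / Real.log (R / R1) with hc1
  have hc1p : 0 < c1 := by positivity
  set c2 := 4 * (R1 + r) / (R1 - r) ^ 2 with hc2
  have hc2p : 0 < c2 := by
    have : 0 < R1 - r := by linarith
    positivity
  set c3 := R1 / (R ^ 2 - R1 * R1) with hc3
  have hden : 0 < R ^ 2 - R1 * R1 := by nlinarith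
  have hc3p : 0 < c3 := by positivity
  refine ⟨c1 + c2 + c3 * c1, by positivity, fun f hf h0 B hB hM => ?_⟩
  obtain ⟨n, ρ, g, hg, hρ, hfac, hgne⟩ := exists_factor hf h0 hR1 hR hM
  obtain ⟨hb1, hb2⟩ := blaschke_bound hg hR1 hR hM ρ hρ hfac
  have hfp : 0 < ‖f 0‖ := by positivity
  have hn : (n : ℝ) ≤ c1 * B := by
    have h3 := hb2.trans (hb1 0 (by simp; linarith))
    have h4 : (R / R1) ^ n ≤ Real.exp B := le_of_mul_le_mul_left h3 hfp
    have h5 := Real.log_le_log (by positivity) h4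
    rw [Real.log_pow, Real.log_exp] at h5
    rw [hc1, one_div, inv_mul_eq_div, le_div_iff₀ hlog]
    exact h5
  have hcB : 0 < c2 * B := by positivity
  have hcB' : 0 < c3 * c1 * B := by positivity
  have hcB1 : 0 < c1 * B := by positivity
  refine ⟨n, ρ, by nlinarith, fun i => ⟨hρ i, ?_⟩, fun z hz hfz => ?_⟩
  · rw [hfac, Finset.prod_eq_zero (Finset.mem_univ i) (by simp), zero_mul]
  set G : ℂ → ℂ := fun z => g z * ∏ i, ((R ^ 2 - conj (ρ i) * z) / R) with hGdef
  have hGd : Differentiable ℂ G := by rw [hGdef]; fun_prop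
  have hRC : (R : ℂ) ≠ 0 := by exact_mod_cast hRp.ne'
  have hlow : ∀ (i) (w : ℂ), ‖w‖ ≤ R1 → R ^ 2 - R1 * R1 ≤ ‖(R:ℂ) ^ 2 - conj (ρ i) * w‖ := by
    intro i w hw
    have h1 : ‖conj (ρ i) * w‖ ≤ R1 * R1 := by
      rw [norm_mul, Complex.norm_conj]
      exact mul_le_mul (hρ i) hw (norm_nonneg _) hR1.le
    have h2 := norm_sub_norm_le ((R:ℂ) ^ 2) (conj (ρ i) * w)
    have h3 : ‖(R:ℂ) ^ 2‖ = R ^ 2 := by rw [norm_pow]; simp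
    linarith
  have hfne : ∀ (i) (w : ℂ), ‖w‖ ≤ R1 → ((R:ℂ) ^ 2 - conj (ρ i) * w) ≠ 0 := by
    intro i w hw h
    have := hlow i w hw
    rw [h, norm_zero] at this
    linarith
  have hGne : ∀ w, ‖w‖ ≤ R1 → G w ≠ 0 := by
    intro w hw
    apply mul_ne_zero (hgne w hw)
    rw [Finset.prod_ne_zero_iff]
    intro i _
    exact div_ne_zero (hfne i w hw) hRC
  have hG0 : ‖f 0‖ ≤ ‖G 0‖ := by
    refine le_trans ?_ hb2
    exact le_mul_of_one_le_right hfp.le (one_le_pow₀ hRR.le)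
  have hLB := logDeriv_bound hGd hr hrR hB (fun w hw => hGne w hw.le)
    (fun w hw => (hb1 w (by linarith)).trans (by gcongr)) z hz
  have hzR1 : ‖z‖ ≤ R1 := by linarith
  have hzρ : ∀ i, z - ρ i ≠ 0 := by
    intro i h
    apply hfz
    rw [hfac, Finset.prod_eq_zero (Finset.mem_univ i) h, zero_mul]
  have e1 : logDeriv f z = ∑ i, 1 / (z - ρ i) + logDeriv g z := by
    have : f = fun z => (∏ i, (z - ρ i)) * g z := funext hfac
    rw [this, logDeriv_mul z (Finset.prod_ne_zero_iff.2 fun i _ => hzρ i) (hgne z hzR1)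
      (by fun_prop) (hg z), logDeriv_prod (fun i _ => hzρ i) (fun i _ => by fun_prop)]
    congr 1
    apply Finset.sum_congr rfl
    intro i _
    simp [logDeriv_apply]
  have e2 : logDeriv G z = logDeriv g z + ∑ i, (-conj (ρ i)) / (R ^ 2 - conj (ρ i) * z) := by
    have hp : ∀ i ∈ (Finset.univ : Finset (Fin n)), (((R:ℂ) ^ 2 - conj (ρ i) * z) / R) ≠ 0 :=
      fun i _ => div_ne_zero (hfne i z hzR1) hRC
    rw [hGdef, logDeriv_mul z (hgne z hzR1) (Finset.prod_ne_zero_iff.2 hp) (hg z) (by fun_prop),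
      logDeriv_prod (f := fun (i : Fin n) (z : ℂ) => ((R:ℂ)^2 - conj (ρ i) * z) / R) (x := z) hp
        (fun i _ => by fun_prop)]
    congr 1
    apply Finset.sum_congr rfl
    intro i _
    have hdv : HasDerivAt (fun z : ℂ => ((R:ℂ) ^ 2 - conj (ρ i) * z) / R) (-conj (ρ i) / R) z := by
      have := (((hasDerivAt_id z).const_mul (conj (ρ i))).const_sub ((R:ℂ)^2)).div_const (R:ℂ)
      simpa using this
    rw [logDeriv_apply, hdv.deriv]
    have := hfne i z hzR1
    field_simp
  have e3 : deriv f z / f z - ∑ i, 1 / (z - ρ i) =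
      deriv G z / G z - ∑ i, (-conj (ρ i)) / (R ^ 2 - conj (ρ i) * z) := by
    rw [← logDeriv_apply, ← logDeriv_apply, e1, e2]; ring
  have e4 : ‖∑ i, (-conj (ρ i)) / (R ^ 2 - conj (ρ i) * z)‖ ≤ n * c3 := by
    refine (norm_sum_le _ _).trans ?_
    have : ∀ i ∈ (Finset.univ : Finset (Fin n)),
        ‖(-conj (ρ i)) / (R ^ 2 - conj (ρ i) * z)‖ ≤ c3 := by
      intro i _
      rw [norm_div, norm_neg, Complex.norm_conj, hc3]
      exact div_le_div₀ hR1.le (hρ i) hden (hlow i z hzR1)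
    refine (Finset.sum_le_card_nsmul _ _ _ this).trans ?_
    simp
  rw [e3]
  refine (norm_sub_le _ _).trans ?_
  have : (n : ℝ) * c3 ≤ c1 * B * c3 := by gcongr
  nlinarith

end VonKoch

end

section

open Complex Set MeasureTheory Filter Topology
namespace VonKoch

lemma f0_zero_re (hRH : RiemannHypothesis) {s : ℂ} (hs : 0 < s.re) (h : f0 s = 0) : s.re = 1 / 2 := by
  have h1 : s ≠ 1 := by rintro rfl; simp [f0_one] at h
  rw [f0_of_ne h1] at h
  have hz := (mul_eq_zero.1 h).resolve_left (sub_ne_zero.2 h1)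
  refine hRH s hz ?_ h1
  rintro ⟨n, rfl⟩
  simp at hs
  linarith [(Nat.cast_nonneg n : (0:ℝ) ≤ n)]

lemma f0_ne_zero (hRH : RiemannHypothesis) {s : ℂ} (hs : 1 / 2 < s.re) : f0 s ≠ 0 := by
  intro h
  have := f0_zero_re hRH (by linarith) h
  linarith

noncomputable def GG (s : ℂ) : ℂ := -(deriv f0 s / f0 s) - 1

lemma f0_deriv_diff : Differentiable ℂ (deriv f0) := (f0_diff.contDiff (n := 2)).differentiable_deriv_two

lemma GG_diff (hRH : RiemannHypothesis) {s : ℂ} (hs : 1 / 2 < s.re) : DifferentiableAt ℂ GG s := by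
  have h1 := f0_deriv_diff s
  have h2 := f0_diff s
  have h3 := f0_ne_zero hRH hs
  exact ((h1.div h2 h3).neg).sub_const 1

lemma GG_eq {s : ℂ} (hs : 1 < s.re) :
    GG s = LSeries (fun n => (ArithmeticFunction.vonMangoldt n : ℂ)) s - s / (s - 1) := by
  have hs1 : s ≠ 1 := by rintro rfl; simp at hs
  have hs1' : s - 1 ≠ 0 := sub_ne_zero.2 hs1
  rw [GG, (f0_logDeriv hs).2]
  field_simp; ring

lemma LSeries_bound {f : ℕ → ℂ} {σ : ℝ} (h : LSeriesSummable f σ) : ∃ C : ℝ, 0 ≤ C ∧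
    ∀ s : ℂ, σ ≤ s.re → ‖LSeries f s‖ ≤ C := by
  refine ⟨∑' n, ‖LSeries.term f σ n‖, tsum_nonneg fun _ => norm_nonneg _, fun s hs => ?_⟩
  have hle : ∀ n, ‖LSeries.term f s n‖ ≤ ‖LSeries.term f σ n‖ :=
    fun n => LSeries.norm_term_le_of_re_le_re f (by simpa using hs) n
  exact tsum_of_norm_bounded h.norm.hasSum hle

lemma GG_bound_right : ∃ C : ℝ, 0 ≤ C ∧ ∀ s : ℂ, 3 / 2 ≤ s.re → ‖GG s‖ ≤ C := by
  obtain ⟨C, hC, h⟩ := LSeries_bound (σ := 3 / 2)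
    (ArithmeticFunction.LSeriesSummable_vonMangoldt (s := ((3 / 2 : ℝ) : ℂ)) (by rw [ofReal_re]; norm_num))
  refine ⟨C + 3, by linarith, fun s hs => ?_⟩
  have hs1 : s ≠ 1 := by rintro rfl; norm_num at hs
  have hs1' : s - 1 ≠ 0 := sub_ne_zero.2 hs1
  rw [GG_eq (by linarith)]
  refine (norm_sub_le _ _).trans (add_le_add (h s hs) ?_)
  have h1 : s / (s - 1) = 1 + 1 / (s - 1) := by field_simp; ring
  have h2 : 1 / 2 ≤ ‖s - 1‖ := by
    refine le_trans ?_ (Complex.re_le_norm _)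
    simp; linarith
  rw [h1]
  refine (norm_add_le _ _).trans ?_
  rw [norm_div, norm_one]
  have : 1 / ‖s - 1‖ ≤ 2 := by rw [div_le_iff₀ (by linarith)]; linarith
  linarith

lemma f0_lower : ∃ δ : ℝ, 0 < δ ∧ ∀ t : ℝ, δ ≤ ‖f0 (2 + t * I)‖ := by
  obtain ⟨C, hC, h⟩ := LSeries_bound (σ := 2)
    (ArithmeticFunction.LSeriesSummable_moebius_iff (s := ((2 : ℝ) : ℂ)) |>.2 (by rw [ofReal_re]; norm_num))
  refine ⟨1 / (C + 1), by positivity, fun t => ?_⟩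
  have hre : (2 + t * I : ℂ).re = 2 := by simp
  have hs1 : (2 + t * I : ℂ) ≠ 1 := by intro h; rw [h] at hre; norm_num at hre
  have h1 := h (2 + t * I) hre.ge
  have h2 := LSeries_one_mul_Lseries_moebius (s := 2 + t * I) (by rw [hre]; norm_num)
  rw [LSeries_one_eq_riemannZeta (by rw [hre]; norm_num)] at h2
  have h3 := congrArg norm h2
  rw [norm_mul, norm_one] at h3
  have h4 : 1 ≤ ‖(2 + t * I : ℂ) - 1‖ := by
    refine le_trans ?_ (Complex.re_le_norm _)
    simp; norm_num
  rw [f0_of_ne hs1, norm_mul, div_le_iff₀ (by positivity)]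
  have h5 : 0 ≤ ‖riemannZeta (2 + t * I)‖ := norm_nonneg _
  calc (1:ℝ) = ‖riemannZeta (2 + t * I)‖ * _ := h3.symm
    _ ≤ ‖riemannZeta (2 + t * I)‖ * (C + 1) := by gcongr; linarith
    _ = 1 * ‖riemannZeta (2 + t * I)‖ * (C + 1) := by ring
    _ ≤ _ := by gcongr

lemma log_ge_half' (t : ℝ) : 1 / 2 ≤ Real.log (|t| + 2) := by
  have h := Real.log_two_gt_d9
  have : Real.log 2 ≤ Real.log (|t| + 2) := Real.log_le_log (by norm_num) (by linarith [abs_nonneg t])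
  linarith

lemma landau_zeta (hRH : RiemannHypothesis) : ∃ c : ℝ, 0 < c ∧ ∀ t : ℝ, ∃ (n : ℕ) (ρ : Fin n → ℂ),
    (n:ℝ) ≤ c * Real.log (|t| + 2) ∧ (∀ i, (ρ i).re = 1 / 2) ∧
    ∀ s : ℂ, ‖s - (2 + t * I)‖ ≤ 1.65 → f0 s ≠ 0 →
      ‖deriv f0 s / f0 s - ∑ i, 1 / (s - ρ i)‖ ≤ c * Real.log (|t| + 2) := by
  obtain ⟨c, hc, hL⟩ := landau (R1 := 1.8) (R := 1.9) (r := 1.65) (by norm_num) (by norm_num) (by norm_num)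
  obtain ⟨δ, hδ, hlow⟩ := f0_lower
  set c' : ℝ := 2 + 2 * |Real.log (69 / δ)| with hc'
  have hc'pos : 0 < c' := by positivity
  refine ⟨c * c', by positivity, fun t => ?_⟩
  have hl := log_ge_half' t
  set w : ℂ := 2 + t * I with hw
  have h0 := hlow t
  obtain ⟨n, ρ, hn, hρ, hz⟩ := hL (fun z => f0 (z + w)) (f0_diff.comp (by fun_prop))
    (by simp only [zero_add]; intro h; rw [← hw, h] at h0; simp at h0; linarith)
    (c' * Real.log (|t| + 2)) (by positivity) (by
      intro z hz
      have hzre : -1.9 ≤ z.re := by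
        have := (abs_le.1 ((Complex.abs_re_le_norm z).trans hz)).1; linarith
      have hb := f0_bound (s := z + w) (by rw [hw]; simp; norm_num at hzre; linarith)
      have hnorm : ‖z + w‖ ≤ 1.9 + (2 + |t|) := by
        refine (norm_add_le _ _).trans (add_le_add hz ?_)
        refine (norm_add_le _ _).trans ?_
        simp
      refine hb.trans ?_
      rw [zero_add]
      have hexp : 69 / δ * (|t| + 2) ^ 2 ≤ Real.exp (c' * Real.log (|t| + 2)) := by
        have hpos : 0 < 69 / δ * (|t| + 2) ^ 2 := by positivity
        rw [← Real.log_le_iff_le_exp hpos, Real.log_mul (by positivity) (by positivity), Real.log_pow, hc']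
        have h1 := le_abs_self (Real.log (69 / δ))
        have h2 : |Real.log (69 / δ)| * 1 ≤ |Real.log (69 / δ)| * (2 * Real.log (|t| + 2)) := by
          gcongr; linarith
        push_cast
        linarith
      calc 11 * (‖z + w‖ + 1) ^ 2 ≤ 11 * (1.9 + (2 + |t|) + 1) ^ 2 := by gcongr
        _ ≤ 69 * (|t| + 2) ^ 2 := by nlinarith [abs_nonneg t]
        _ = δ * (69 / δ * (|t| + 2) ^ 2) := by field_simp
        _ ≤ _ := by gcongr)
  refine ⟨n, fun i => ρ i + w, by rw [mul_assoc]; exact hn, fun i => ?_, fun s hs hfs => ?_⟩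
  · refine f0_zero_re hRH ?_ (hρ i).2
    have := (abs_le.1 ((Complex.abs_re_le_norm (ρ i)).trans (hρ i).1)).1
    rw [hw]; simp; norm_num at this; linarith
  · have h1 := hz (s - w) hs (by simpa using hfs)
    simp only [deriv_comp_add_const, sub_add_cancel] at h1
    rw [mul_assoc]
    have e : ∀ i, s - (ρ i + w) = s - w - ρ i := fun i => by ring
    simp only [e]
    exact h1

lemma GG_bound_strip (hRH : RiemannHypothesis) : ∃ c : ℝ, 0 < c ∧ ∀ s : ℂ, 1 / 2 < s.re → s.re ≤ 3 / 2 →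
    ‖GG s‖ ≤ c * Real.log (|s.im| + 2) / (s.re - 1 / 2) := by
  obtain ⟨c, hc, hL⟩ := landau_zeta hRH
  refine ⟨2 + 2 * c, by positivity, fun s h1 h2 => ?_⟩
  obtain ⟨n, ρ, hn, hρ, hz⟩ := hL s.im
  have hl := log_ge_half' s.im
  set L := Real.log (|s.im| + 2)
  have hs : s - (2 + s.im * I) = ((s.re - 2 : ℝ) : ℂ) := by
    apply Complex.ext <;> simp
  have hd := hz s (by rw [hs, Complex.norm_real, Real.norm_eq_abs, abs_le]; constructor <;> norm_num <;> linarith)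
    (f0_ne_zero hRH h1)
  have hδ : 0 < s.re - 1 / 2 := by linarith
  have hsum : ‖∑ i, 1 / (s - ρ i)‖ ≤ c * L / (s.re - 1 / 2) := by
    calc _ ≤ ∑ i : Fin n, 1 / (s.re - 1 / 2) := by
          refine norm_sum_le_of_le _ fun i _ => ?_
          rw [norm_div, norm_one]
          apply one_div_le_one_div_of_le hδ
          refine le_trans ?_ (Complex.re_le_norm _)
          rw [Complex.sub_re, hρ i]
      _ = n / (s.re - 1 / 2) := by simp; ring
      _ ≤ _ := by gcongr
  have e : GG s = -(deriv f0 s / f0 s - ∑ i, 1 / (s - ρ i)) - ∑ i, 1 / (s - ρ i) - 1 := by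
    rw [GG]; ring
  rw [e]
  have h3 : c * L ≤ c * L / (s.re - 1 / 2) := by
    rw [le_div_iff₀ hδ]
    have : c * L * (s.re - 1 / 2) ≤ c * L * 1 := by gcongr; linarith
    linarith
  have h4 : 1 ≤ 2 * L / (s.re - 1 / 2) := by
    rw [le_div_iff₀ hδ]; linarith
  calc _ ≤ c * L + c * L / (s.re - 1 / 2) + 1 := by
        refine (norm_sub_le _ _).trans (add_le_add ((norm_sub_le _ _).trans (add_le_add ?_ hsum)) (by simp))
        rwa [norm_neg]
    _ ≤ c * L / (s.re - 1 / 2) + c * L / (s.re - 1 / 2) + 2 * L / (s.re - 1 / 2) := by linarith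
    _ = _ := by ring

lemma poisson_int {δ : ℝ} (hδ : 0 < δ) (γ a b : ℝ) :
    ∫ t in a..b, δ / (δ ^ 2 + (t - γ) ^ 2) ≤ Real.pi := by
  have h : ∀ t ∈ uIcc a b, HasDerivAt (fun t => Real.arctan ((t - γ) / δ)) (δ / (δ ^ 2 + (t - γ) ^ 2)) t := by
    intro t _
    have := (((hasDerivAt_id t).sub_const γ).div_const δ).arctan
    convert! this using 1
    simp
    field_simp
  rw [intervalIntegral.integral_eq_sub_of_hasDerivAt h]
  · linarith [Real.arctan_lt_pi_div_two ((b - γ) / δ), Real.neg_pi_div_two_lt_arctan ((a - γ) / δ)]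
  · apply Continuous.intervalIntegrable
    refine continuous_const.div (by fun_prop) fun t => by positivity

lemma GG_re_int (hRH : RiemannHypothesis) : ∃ c : ℝ, 0 < c ∧ ∀ σ a : ℝ, 1 / 2 < σ → σ ≤ 3 / 2 →
    ∫ t in a..(a+1), |(GG (σ + t * I)).re| ≤ c * Real.log (|a| + 2) := by
  obtain ⟨c, hc, hL⟩ := landau_zeta hRH
  refine ⟨2 * (2 + c + c * Real.pi), by positivity, fun σ a h1 h2 => ?_⟩
  obtain ⟨n, ρ, hn, hρ, hz⟩ := hL (a + 1 / 2)
  have hl := log_ge_half' (a + 1 / 2)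
  have hlog : Real.log (|a + 1 / 2| + 2) ≤ 2 * Real.log (|a| + 2) := by
    have h0 := abs_nonneg a
    have : |a + 1 / 2| ≤ |a| + 1 / 2 := by
      refine (abs_add_le _ _).trans ?_
      rw [abs_of_pos (by norm_num : (0:ℝ) < 1 / 2)]
    rw [← Real.log_rpow (by positivity)]
    apply Real.log_le_log (by positivity)
    rw [Real.rpow_two]
    nlinarith
  set L := Real.log (|a + 1 / 2| + 2)
  have hδ : 0 < σ - 1 / 2 := by linarith
  have hsre : ∀ t : ℝ, (σ + t * I : ℂ).re = σ := by simp
  have hsim : ∀ t : ℝ, (σ + t * I : ℂ).im = t := by simp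
  have hre : ∀ i, ∀ t : ℝ, (1 / ((σ + t * I : ℂ) - ρ i)).re = (σ - 1 / 2) / ((σ - 1 / 2) ^ 2 + (t - (ρ i).im) ^ 2) := by
    intro i t
    rw [one_div, Complex.inv_re, Complex.normSq_apply]
    simp only [sub_re, sub_im, hsre, hsim, hρ i]
    congr 1; ring
  have hcont : Continuous (fun t : ℝ => GG (σ + t * I)) := by
    rw [continuous_iff_continuousAt]
    intro t
    have h : ContinuousAt GG (σ + t * I) := (GG_diff hRH (by rw [hsre]; exact h1)).continuousAt
    exact ContinuousAt.comp (f := fun t : ℝ => (σ + t * I : ℂ)) h (by fun_prop)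
  have hP : ∀ i, Continuous (fun t : ℝ => (σ - 1 / 2) / ((σ - 1 / 2) ^ 2 + (t - (ρ i).im) ^ 2)) := by
    intro i
    refine continuous_const.div (by fun_prop) fun t => by positivity
  have hpt : ∀ t ∈ Icc a (a + 1), |(GG (σ + t * I)).re| ≤
      (1 + c * L) + ∑ i, (σ - 1 / 2) / ((σ - 1 / 2) ^ 2 + (t - (ρ i).im) ^ 2) := by
    intro t ht
    have hd := hz (σ + t * I) (by
      have e : (σ + t * I : ℂ) - (2 + ((a + 1/2 : ℝ) : ℂ) * I) = ((σ - 2 : ℝ) : ℂ) + ((t - (a + 1/2) : ℝ) : ℂ) * I := by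
        push_cast; ring
      rw [e, Complex.norm_add_mul_I]
      rw [Real.sqrt_le_left (by norm_num)]
      norm_num
      nlinarith [ht.1, ht.2]) (f0_ne_zero hRH (by rw [hsre]; exact h1))
    have e : GG (σ + t * I) = -(deriv f0 (σ + t * I) / f0 (σ + t * I) - ∑ i, 1 / ((σ + t * I) - ρ i)) -
        ∑ i, 1 / ((σ + t * I : ℂ) - ρ i) - 1 := by
      rw [GG]; ring
    have h3 := (Complex.abs_re_le_norm _).trans hd
    set X := deriv f0 (σ + t * I) / f0 (σ + t * I) - ∑ i, 1 / ((σ + t * I) - ρ i)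
    have hnn : 0 ≤ ∑ i, (σ - 1 / 2) / ((σ - 1 / 2) ^ 2 + (t - (ρ i).im) ^ 2) :=
      Finset.sum_nonneg fun i _ => by positivity
    rw [e, sub_re, sub_re, neg_re, Complex.re_sum, one_re]
    simp only [hre]
    rw [abs_le] at h3 ⊢
    constructor <;> linarith
  calc _ ≤ ∫ t in a..(a+1), ((1 + c * L) + ∑ i, (σ - 1 / 2) / ((σ - 1 / 2) ^ 2 + (t - (ρ i).im) ^ 2)) := by
        apply intervalIntegral.integral_mono_on (by linarith) _ _ hpt
        · exact (Complex.continuous_re.comp hcont).abs.intervalIntegrable _ _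
        · exact (continuous_const.add (continuous_finsetSum _ fun i _ => hP i)).intervalIntegrable _ _
    _ = (1 + c * L) + ∑ i, ∫ t in a..(a+1), (σ - 1 / 2) / ((σ - 1 / 2) ^ 2 + (t - (ρ i).im) ^ 2) := by
        rw [intervalIntegral.integral_add (by simp)
          ((continuous_finsetSum _ fun i _ => hP i).intervalIntegrable _ _),
          intervalIntegral.integral_finsetSum fun i _ => (hP i).intervalIntegrable _ _]
        simp
    _ ≤ (1 + c * L) + ∑ i : Fin n, Real.pi := by
        gcongr with i
        exact poisson_int hδ _ _ _
    _ = (1 + c * L) + n * Real.pi := by simp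
    _ ≤ (2 * L + c * L) + (c * L) * Real.pi := by
        gcongr; linarith
    _ = (2 + c + c * Real.pi) * L := by ring
    _ ≤ (2 + c + c * Real.pi) * (2 * Real.log (|a| + 2)) := by gcongr
    _ = _ := by ring
end VonKoch

end

section

open Complex Set MeasureTheory Filter Topology
namespace VonKoch

lemma int_w : Integrable (fun t : ℝ => (1 + |t|) ^ (-(3/2) : ℝ)) := by
  have := integrable_one_add_norm (E := ℝ) (μ := volume) (r := 3 / 2) (by simp; norm_num)
  simpa using this

lemma tendsto_w (l : Filter ℝ) (hl : Tendsto (fun t : ℝ => |t|) l atTop) :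
    Tendsto (fun t : ℝ => (1 + |t|) ^ (-(3/2) : ℝ)) l (𝓝 0) := by
  have h1 := tendsto_rpow_neg_atTop (y := 3 / 2) (by norm_num)
  exact h1.comp (tendsto_atTop_add_const_left _ 1 hl)

lemma line_int {F : ℂ → ℂ} {a : ℝ} (hc : ∀ t : ℝ, ContinuousAt F (a + t * I)) {M : ℝ}
    (hM : ∀ t : ℝ, ‖F (a + t * I)‖ ≤ M * (1 + |t|) ^ (-(3/2) : ℝ)) :
    Integrable (fun t : ℝ => F (a + t * I)) := by
  refine (int_w.const_mul M).mono' ?_ (Eventually.of_forall hM)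
  apply Continuous.aestronglyMeasurable
  rw [continuous_iff_continuousAt]
  intro t
  exact ContinuousAt.comp (f := fun t : ℝ => (a + t * I : ℂ)) (hc t) (by fun_prop)

lemma shift {F : ℂ → ℂ} {a b M : ℝ} (hab : a ≤ b)
    (hd : ∀ s : ℂ, a ≤ s.re → s.re ≤ b → DifferentiableAt ℂ F s)
    (hM : ∀ s : ℂ, a ≤ s.re → s.re ≤ b → ‖F s‖ ≤ M * (1 + |s.im|) ^ (-(3/2) : ℝ)) :
    ∫ t : ℝ, F (a + t * I) = ∫ t : ℝ, F (b + t * I) := by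
  have hia : Integrable (fun t : ℝ => F (a + t * I)) :=
    line_int (fun t => (hd _ (by simp) (by simpa)).continuousAt)
      (fun t => by simpa using hM (a + t * I) (by simp) (by simpa))
  have hib : Integrable (fun t : ℝ => F (b + t * I)) :=
    line_int (fun t => (hd _ (by simpa) (by simp)).continuousAt)
      (fun t => by simpa using hM (b + t * I) (by simpa) (by simp))
  have ha := intervalIntegral_tendsto_integral hia tendsto_neg_atTop_atBot tendsto_id
  have hb := intervalIntegral_tendsto_integral hib tendsto_neg_atTop_atBot tendsto_id
  have hrect : ∀ T : ℝ, (∫ x in a..b, F (x + (-T : ℝ) * I)) - (∫ x in a..b, F (x + T * I)) +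
      I • (∫ y in (-T)..T, F (b + y * I)) - I • (∫ y in (-T)..T, F (a + y * I)) = 0 := by
    intro T
    have := integral_boundary_rect_eq_zero_of_differentiableOn F (⟨a, -T⟩) (⟨b, T⟩) (by
      intro s hs
      rw [mem_reProdIm, uIcc_of_le hab] at hs
      exact (hd s hs.1.1 hs.1.2).differentiableWithinAt)
    simpa using this
  have hside : ∀ e : ℝ → ℝ, Tendsto (fun T => |e T|) atTop atTop →
      Tendsto (fun T : ℝ => ∫ x in a..b, F (x + (e T : ℝ) * I)) atTop (𝓝 0) := by
    intro e he
    have h1 : Tendsto (fun T : ℝ => M * (1 + |e T|) ^ (-(3/2) : ℝ) * |b - a|) atTop (𝓝 0) := by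
      have h1 := tendsto_rpow_neg_atTop (y := 3 / 2) (by norm_num)
      have h2 := h1.comp (tendsto_atTop_add_const_left _ 1 he)
      have := (h2.const_mul M).mul_const |b - a|
      simpa using this
    refine squeeze_zero_norm (fun T => ?_) h1
    apply intervalIntegral.norm_integral_le_of_norm_le_const
    intro x hx
    rw [uIoc_of_le hab] at hx
    simpa using hM (x + (e T : ℝ) * I) (by simpa using hx.1.le) (by simpa using hx.2)
  have hs1 := hside (fun T => -T) (by simpa using tendsto_abs_atTop_atTop)
  have hs2 := hside (fun T => T) tendsto_abs_atTop_atTop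
  have hlim := ((hs1.sub hs2).add (hb.const_smul I)).sub (ha.const_smul I)
  have hz : Tendsto (fun _ : ℝ => (0:ℂ)) atTop (𝓝 0) := tendsto_const_nhds
  have := tendsto_nhds_unique (hlim.congr (fun T => by simpa using hrect T)) hz
  simp only [sub_self, zero_add, smul_eq_mul] at this
  have h2 : I * ((∫ t : ℝ, F (b + t * I)) - ∫ t : ℝ, F (a + t * I)) = 0 := by
    rw [mul_sub]; exact this
  have h3 := (mul_eq_zero.1 h2).resolve_left I_ne_zero
  exact (sub_eq_zero.1 h3).symm

/-- numerator of the kernel -/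
noncomputable def BB (u h : ℝ) (s : ℂ) : ℂ := (cexp ((u + h) * s) - cexp (u * s)) / h - (cexp s - 1)

noncomputable def KK (u h : ℝ) : ℂ → ℂ := dslope (dslope (BB u h) 0) 0

lemma BB_diff (u h : ℝ) : Differentiable ℂ (BB u h) := by unfold BB; fun_prop

lemma dslope_diff {f : ℂ → ℂ} (hf : Differentiable ℂ f) : Differentiable ℂ (dslope f 0) := by
  rw [← differentiableOn_univ, Complex.differentiableOn_dslope univ_mem]
  exact hf.differentiableOn

lemma KK_diff (u h : ℝ) : Differentiable ℂ (KK u h) := dslope_diff (dslope_diff (BB_diff u h))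

lemma KK_eq {u h : ℝ} (hh : h ≠ 0) {s : ℂ} (hs : s ≠ 0) : KK u h s = BB u h s / s ^ 2 := by
  have h1 : BB u h 0 = 0 := by simp [BB]
  have h2 : deriv (BB u h) 0 = 0 := by
    have e : ∀ a : ℂ, HasDerivAt (fun s : ℂ => cexp (a * s)) a 0 := by
      intro a
      have := ((hasDerivAt_id (0:ℂ)).const_mul a).cexp
      simpa using this
    have := (((e (u + h)).sub (e u)).div_const (h:ℂ)).sub (((e 1)).sub_const 1)
    have h3 : HasDerivAt (BB u h) ((u + h - u) / h - 1 : ℂ) 0 := by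
      refine this.congr_of_eventuallyEq (Eventually.of_forall fun s => ?_)
      simp [BB]
    rw [h3.deriv]
    have : (h:ℂ) ≠ 0 := by exact_mod_cast hh
    field_simp; ring
  rw [KK, dslope_of_ne _ hs, slope_def_field, dslope_of_ne _ hs, slope_def_field, dslope_same, h1, h2]
  simp; field_simp

lemma BB_conj (u h : ℝ) (s : ℂ) : BB u h (starRingEnd ℂ s) = starRingEnd ℂ (BB u h s) := by
  simp [BB, ← Complex.exp_conj]

lemma BB_bound {u h : ℝ} (hu : 0 ≤ u) (hh : 0 < h) {b : ℝ} {s : ℂ} (hs : s.re ≤ b) :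
    ‖BB u h s‖ ≤ (Real.exp ((u + h) * b) + Real.exp (u * b)) / h + (Real.exp b + 1) := by
  unfold BB
  refine (norm_sub_le _ _).trans (add_le_add ?_ ((norm_sub_le _ _).trans ?_))
  · rw [norm_div, Complex.norm_real, Real.norm_of_nonneg hh.le]
    gcongr
    refine (norm_sub_le _ _).trans (add_le_add ?_ ?_)
    · rw [Complex.norm_exp, ← ofReal_add, Complex.re_ofReal_mul]
      gcongr
    · rw [Complex.norm_exp, Complex.re_ofReal_mul]
      gcongr
  · rw [Complex.norm_exp, norm_one]
    gcongr

lemma KK_strip {u h : ℝ} (hu : 0 ≤ u) (hh : 0 < h) (a b : ℝ) : ∃ M : ℝ, 0 ≤ M ∧ ∀ s : ℂ, a ≤ s.re → s.re ≤ b →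
    ‖KK u h s‖ ≤ M / (1 + |s.im|) ^ 2 := by
  have hcomp : IsCompact (Icc a b ×ℂ Icc (-1) 1) := isCompact_Icc.reProdIm isCompact_Icc
  obtain ⟨M1, hM1⟩ := hcomp.exists_bound_of_continuousOn (KK_diff u h).continuous.continuousOn
  set M2 := (Real.exp ((u + h) * |b|) + Real.exp (u * |b|)) / h + (Real.exp |b| + 1) with hM2
  have hM2p : 0 ≤ M2 := by positivity
  refine ⟨4 * |M1| + 4 * M2, by positivity, fun s h1 h2 => ?_⟩
  rw [le_div_iff₀ (by positivity)]
  by_cases hs : |s.im| ≤ 1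
  · have := hM1 s (by rw [mem_reProdIm]; exact ⟨⟨h1, h2⟩, abs_le.1 hs⟩)
    calc _ ≤ |M1| * (1 + 1) ^ 2 := by
          gcongr; exact this.trans (le_abs_self _)
      _ ≤ _ := by linarith
  · push Not at hs
    have hs0 : s ≠ 0 := by rintro rfl; simp at hs; linarith
    have hn := Complex.abs_im_le_norm s
    rw [KK_eq hh.ne' hs0, norm_div, norm_pow, div_mul_eq_mul_div, div_le_iff₀ (by positivity)]
    calc _ ≤ M2 * (1 + |s.im|) ^ 2 := by
          gcongr; exact BB_bound hu hh (h2.trans (le_abs_self b))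
      _ ≤ M2 * (2 * ‖s‖) ^ 2 := by gcongr; linarith
      _ = 4 * M2 * ‖s‖ ^ 2 := by ring
      _ ≤ _ := by gcongr; linarith [abs_nonneg M1]

lemma GG_sqrt (hRH : RiemannHypothesis) {σ : ℝ} (hσ : 1 / 2 < σ) : ∃ M : ℝ, 0 ≤ M ∧ ∀ s : ℂ, σ ≤ s.re →
    ‖GG s‖ ≤ M * (1 + |s.im|) ^ (1/2 : ℝ) := by
  obtain ⟨c1, hc1, h1⟩ := GG_bound_right
  obtain ⟨c2, hc2, h2⟩ := GG_bound_strip hRH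
  have hd : 0 < σ - 1 / 2 := by linarith
  refine ⟨c1 + c2 * 4 / (σ - 1 / 2), by positivity, fun s hs => ?_⟩
  have hp : (1:ℝ) ≤ (1 + |s.im|) ^ (1/2 : ℝ) := Real.one_le_rpow (by linarith [abs_nonneg s.im]) (by norm_num)
  rw [add_mul]
  by_cases h : s.re ≤ 3 / 2
  · have h3 := h2 s (by linarith) h
    have h4 : Real.log (|s.im| + 2) ≤ 4 * (1 + |s.im|) ^ (1/2 : ℝ) := by
      have := Real.log_le_rpow_div (x := |s.im| + 2) (by positivity) (by norm_num : (0:ℝ) < 1 / 2)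
      have h5 : (|s.im| + 2) ^ (1/2:ℝ) ≤ (4 * (1 + |s.im|)) ^ (1/2:ℝ) := by
        gcongr; linarith [abs_nonneg s.im]
      have h6 : (4:ℝ) ^ (1/2:ℝ) = 2 := by
        rw [← Real.sqrt_eq_rpow, show (4:ℝ) = 2 ^ 2 by norm_num, Real.sqrt_sq (by norm_num)]
      rw [Real.mul_rpow (by norm_num) (by positivity), h6] at h5
      linarith
    have h7 : 0 ≤ c1 * (1 + |s.im|) ^ (1/2 : ℝ) := by positivity
    calc _ ≤ _ := h3
      _ ≤ c2 * (4 * (1 + |s.im|) ^ (1/2 : ℝ)) / (σ - 1 / 2) := by gcongr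
      _ = c2 * 4 / (σ - 1 / 2) * (1 + |s.im|) ^ (1/2 : ℝ) := by ring
      _ ≤ _ := by linarith
  · push Not at h
    have h3 := h1 s h.le
    have h7 : 0 ≤ c2 * 4 / (σ - 1 / 2) * (1 + |s.im|) ^ (1/2 : ℝ) := by positivity
    have h8 : c1 * 1 ≤ c1 * (1 + |s.im|) ^ (1/2 : ℝ) := by gcongr
    linarith

lemma half_div_sq {y : ℝ} (hy : 0 < y) : y ^ (1/2:ℝ) / y ^ 2 = y ^ (-(3/2) : ℝ) := by
  rw [← Real.rpow_natCast, ← Real.rpow_sub hy]; norm_num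

end VonKoch

end

section

open Complex Set MeasureTheory Filter Topology
namespace VonKoch

lemma shift_left (hRH : RiemannHypothesis) {u h : ℝ} (hu : 0 ≤ u) (hh : 0 < h) {σ : ℝ} (hσ : 1 / 2 < σ)
    (hσ2 : σ ≤ 2) : ∫ t : ℝ, GG (σ + t * I) * KK u h (σ + t * I) =
      ∫ t : ℝ, GG ((2:ℝ) + t * I) * KK u h ((2:ℝ) + t * I) := by
  obtain ⟨M1, hM1, h1⟩ := GG_sqrt hRH hσ
  obtain ⟨M2, hM2, h2⟩ := KK_strip hu hh σ 2
  apply shift (F := fun s => GG s * KK u h s) (M := M1 * M2) hσ2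
  · intro s hs _
    exact (GG_diff hRH (by linarith)).mul (KK_diff u h s)
  · intro s hs hs'
    rw [norm_mul, ← half_div_sq (by positivity)]
    calc _ ≤ (M1 * (1 + |s.im|) ^ (1/2 : ℝ)) * (M2 / (1 + |s.im|) ^ 2) := by
          gcongr
          · exact h1 s hs
          · exact h2 s hs hs'
      _ = _ := by ring

lemma line_integrable (hRH : RiemannHypothesis) {u h : ℝ} (hu : 0 ≤ u) (hh : 0 < h) {σ : ℝ} (hσ : 1 / 2 < σ) :
    Integrable (fun t : ℝ => GG (σ + t * I) * KK u h (σ + t * I)) := by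
  obtain ⟨M1, hM1, h1⟩ := GG_sqrt hRH hσ
  obtain ⟨M2, hM2, h2⟩ := KK_strip hu hh σ σ
  apply line_int (F := fun s => GG s * KK u h s) (M := M1 * M2)
  · intro t
    exact ((GG_diff hRH (by simpa using hσ)).mul (KK_diff u h _)).continuousAt
  · intro t
    rw [norm_mul, ← half_div_sq (by positivity)]
    have h3 := h1 (σ + t * I) (by simp)
    have h4 := h2 (σ + t * I) (by simp) (by simp)
    have e : (σ + t * I : ℂ).im = t := by simp
    rw [e] at h3 h4
    calc _ ≤ (M1 * (1 + |t|) ^ (1/2 : ℝ)) * (M2 / (1 + |t|) ^ 2) := by gcongr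
      _ = _ := by ring

lemma reflect_integrable (hRH : RiemannHypothesis) {u h : ℝ} (hu : 0 ≤ u) (hh : 0 < h) {σ : ℝ} (hσ : 1 / 2 < σ) :
    Integrable (fun t : ℝ => GG (σ + t * I) * KK u h (2 * σ - (σ + t * I))) := by
  obtain ⟨M1, hM1, h1⟩ := GG_sqrt hRH hσ
  obtain ⟨M2, hM2, h2⟩ := KK_strip hu hh σ σ
  apply line_int (F := fun s => GG s * KK u h (2 * σ - s)) (M := M1 * M2)
  · intro t
    exact ((GG_diff hRH (by simpa using hσ)).mul ((KK_diff u h).comp (by fun_prop) _)).continuousAt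
  · intro t
    rw [norm_mul, ← half_div_sq (by positivity)]
    have h3 := h1 (σ + t * I) (by simp)
    have h4 := h2 (2 * σ - (σ + t * I)) (by simp; linarith) (by simp; linarith)
    have e : (σ + t * I : ℂ).im = t := by simp
    have e' : |(2 * σ - (σ + t * I) : ℂ).im| = |t| := by simp
    rw [e] at h3
    rw [e'] at h4
    calc _ ≤ (M1 * (1 + |t|) ^ (1/2 : ℝ)) * (M2 / (1 + |t|) ^ 2) := by gcongr
      _ = _ := by ring

lemma reflect (hRH : RiemannHypothesis) {u h : ℝ} (hu : 0 ≤ u) (hh : 0 < h) {σ : ℝ} (hσ : 1 / 2 < σ) :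
    ∫ t : ℝ, GG (σ + t * I) * KK u h (2 * σ - (σ + t * I)) = 0 := by
  obtain ⟨M1, hM1, h1⟩ := GG_sqrt hRH hσ
  obtain ⟨c, hc, hcb⟩ := GG_bound_right
  set F : ℂ → ℂ := fun s => GG s * KK u h (2 * σ - s) with hF
  set M3 := (Real.exp ((u + h) * 0) + Real.exp (u * 0)) / h + (Real.exp 0 + 1) with hM3
  have hM3p : 0 ≤ M3 := by positivity
  set W : ℝ := ∫ t : ℝ, (1 + |t|) ^ (-(3/2) : ℝ)
  have key : ∀ d : ℝ, 3 / 2 ≤ d → ‖∫ t : ℝ, F (σ + t * I)‖ ≤ c * M3 * 4 * W * d ^ (-(1/2):ℝ) := by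
    intro d hd
    obtain ⟨M2, hM2, h2⟩ := KK_strip hu hh (2 * σ - (2 * σ + d)) σ
    have hsh : ∫ t : ℝ, F (σ + t * I) = ∫ t : ℝ, F ((2 * σ + d : ℝ) + t * I) := by
      apply shift (M := M1 * M2) (by linarith)
      · intro s hs _
        exact (GG_diff hRH (by linarith)).mul ((KK_diff u h).comp (by fun_prop) _)
      · intro s hs hs'
        rw [norm_mul, ← half_div_sq (by positivity)]
        have h4 := h2 (2 * σ - s) (by simp; linarith) (by simp; linarith)
        have e' : |(2 * σ - s : ℂ).im| = |s.im| := by simp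
        rw [e'] at h4
        calc _ ≤ (M1 * (1 + |s.im|) ^ (1/2 : ℝ)) * (M2 / (1 + |s.im|) ^ 2) := by
              gcongr
              exact h1 s hs
          _ = _ := by ring
    rw [hsh]
    have hd0 : 0 < d := by linarith
    have hpt : ∀ t : ℝ, ‖F ((2 * σ + d : ℝ) + t * I)‖ ≤ c * M3 * 4 * d ^ (-(1/2):ℝ) * (1 + |t|) ^ (-(3/2) : ℝ) := by
      intro t
      set w : ℂ := 2 * σ - ((2 * σ + d : ℝ) + t * I) with hw
      have hre : w.re = -d := by rw [hw]; simp
      have him : w.im = -t := by rw [hw]; simp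
      have hw0 : w ≠ 0 := by intro h; rw [h] at hre; simp at hre; linarith
      have hn1 : d ≤ ‖w‖ := by
        have := Complex.abs_re_le_norm w
        rw [hre, abs_neg, abs_of_pos hd0] at this; exact this
      have hn2 : |t| ≤ ‖w‖ := by
        have := Complex.abs_im_le_norm w
        rwa [him, abs_neg] at this
      have hn3 : (1 + |t|) / 2 ≤ ‖w‖ := by linarith
      have hwp : 0 < ‖w‖ := by linarith
      show ‖GG _ * KK u h w‖ ≤ _
      rw [norm_mul, KK_eq hh.ne' hw0, norm_div, norm_pow]
      have hB := BB_bound hu hh (b := 0) (s := w) (by rw [hre]; linarith)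
      rw [← hM3] at hB
      have hG := hcb ((2 * σ + d : ℝ) + t * I) (by simp; linarith)
      have hwpow : 1 / ‖w‖ ^ 2 ≤ d ^ (-(1/2):ℝ) * (4 * (1 + |t|) ^ (-(3/2) : ℝ)) := by
        have e1 : 1 / ‖w‖ ^ 2 = ‖w‖ ^ (-(1/2):ℝ) * ‖w‖ ^ (-(3/2):ℝ) := by
          rw [← Real.rpow_add hwp, show (-(1/2) + -(3/2) : ℝ) = -((2:ℕ):ℝ) by norm_num, Real.rpow_neg hwp.le, Real.rpow_natCast]
          simp
        have e2 : ‖w‖ ^ (-(1/2):ℝ) ≤ d ^ (-(1/2):ℝ) := Real.rpow_le_rpow_of_nonpos hd0 hn1 (by norm_num)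
        have e3 : ‖w‖ ^ (-(3/2):ℝ) ≤ ((1 + |t|) / 2) ^ (-(3/2):ℝ) :=
          Real.rpow_le_rpow_of_nonpos (by positivity) hn3 (by norm_num)
        have e4 : ((1 + |t|) / 2) ^ (-(3/2):ℝ) ≤ 4 * (1 + |t|) ^ (-(3/2) : ℝ) := by
          rw [Real.div_rpow (by positivity) (by norm_num), Real.rpow_neg (by norm_num : (0:ℝ) ≤ 2), div_inv_eq_mul, mul_comm]
          gcongr
          calc (2:ℝ) ^ (3/2:ℝ) ≤ 2 ^ (2:ℝ) := Real.rpow_le_rpow_of_exponent_le (by norm_num) (by norm_num)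
            _ = 4 := by norm_num
        rw [e1]
        gcongr
        exact e3.trans e4
      calc _ ≤ c * (M3 / ‖w‖ ^ 2) := by gcongr
        _ = c * M3 * (1 / ‖w‖ ^ 2) := by ring
        _ ≤ c * M3 * (d ^ (-(1/2):ℝ) * (4 * (1 + |t|) ^ (-(3/2) : ℝ))) := by gcongr
        _ = _ := by ring
    refine (norm_integral_le_of_norm_le (int_w.const_mul _) (Eventually.of_forall hpt)).trans (le_of_eq ?_)
    rw [integral_const_mul]; ring
  have hlim : Tendsto (fun d : ℝ => c * M3 * 4 * W * d ^ (-(1/2):ℝ)) atTop (𝓝 0) := by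
    have := (tendsto_rpow_neg_atTop (y := 1 / 2) (by norm_num)).const_mul (c * M3 * 4 * W)
    simpa using this
  have : ‖∫ t : ℝ, F (σ + t * I)‖ ≤ 0 :=
    ge_of_tendsto hlim (by filter_upwards [eventually_ge_atTop (3/2)] with d hd using key d hd)
  exact norm_le_zero_iff.1 this

/-- Symmetrised formula. -/
lemma symm_formula (hRH : RiemannHypothesis) {u h : ℝ} (hu : 0 ≤ u) (hh : 0 < h) {σ : ℝ} (hσ : 1 / 2 < σ)
    (hσ2 : σ ≤ 2) : (∫ t : ℝ, GG ((2:ℝ) + t * I) * KK u h ((2:ℝ) + t * I)).re =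
      2 * ∫ t : ℝ, (GG (σ + t * I)).re * (KK u h (σ + t * I)).re := by
  have e : ∀ t : ℝ, GG (σ + t * I) * KK u h (σ + t * I) + GG (σ + t * I) * KK u h (2 * σ - (σ + t * I)) =
      GG (σ + t * I) * ((2 * (KK u h (σ + t * I)).re : ℝ) : ℂ) := by
    intro t
    have hc : (2 * σ - (σ + t * I) : ℂ) = starRingEnd ℂ (σ + t * I) := by
      simp; ring
    have hs : (σ + t * I : ℂ) ≠ 0 := by
      intro h; have := congrArg Complex.re h; simp at this; linarith
    have hk : KK u h (starRingEnd ℂ (σ + t * I)) = starRingEnd ℂ (KK u h (σ + t * I)) := by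
      rw [KK_eq hh.ne' hs, KK_eq hh.ne' ((map_ne_zero _).2 hs), BB_conj, map_div₀, map_pow]
    rw [hc, hk, ← mul_add, Complex.add_conj]
  have h1 := integral_add (line_integrable hRH hu hh hσ) (reflect_integrable hRH hu hh hσ)
  rw [reflect hRH hu hh hσ, add_zero, shift_left hRH hu hh hσ hσ2] at h1
  rw [← h1]
  have hsumint := (line_integrable hRH hu hh hσ).add (reflect_integrable hRH hu hh hσ)
  have h2 := integral_re hsumint
  simp only [Pi.add_apply] at h2
  refine Eq.trans h2.symm ?_
  rw [← integral_const_mul]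
  congr 1; ext t
  rw [e t]
  simp; ring

end VonKoch

end

section

open Complex Set MeasureTheory Filter Topology
namespace VonKoch

noncomputable def ev (v : ℝ) : ℝ := Chebyshev.psi (Real.exp v) - Real.exp v

noncomputable def Phi (b : ℝ) : ℝ := ∫ v in Ioc 0 b, ev v

lemma psi_bound1 : ∀ t : ℝ, t > 1 → ‖((Chebyshev.psi t - t : ℝ) : ℂ)‖ ≤ 8 * t ^ (1:ℝ) := by
  intro t ht
  have h1 := Chebyshev.psi_le_const_mul_self (by linarith : 0 ≤ t)
  have h2 := Chebyshev.psi_nonneg t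
  have h3 : Real.log 4 ≤ 3 := by
    have := Real.log_le_sub_one_of_pos (by norm_num : (0:ℝ) < 4); linarith
  rw [Complex.norm_real, Real.norm_eq_abs, abs_le, Real.rpow_one]
  constructor <;> nlinarith

lemma ev_bound {v : ℝ} (hv : 0 < v) : |ev v| ≤ 8 * Real.exp v := by
  have := psi_bound1 (Real.exp v) (by simpa using hv)
  rwa [Complex.norm_real, Real.norm_eq_abs, Real.rpow_one] at this

lemma ev_meas : Measurable ev := by
  have : Measurable Chebyshev.psi := Chebyshev.psi_mono.measurable
  unfold ev; fun_prop

lemma ev_ii (a b : ℝ) : IntervalIntegrable ev volume a b := by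
  have h1 : Monotone (fun v => Chebyshev.psi (Real.exp v)) := fun x y hxy =>
    Chebyshev.psi_mono (Real.exp_le_exp.2 hxy)
  exact h1.intervalIntegrable.sub (Real.continuous_exp.intervalIntegrable _ _)

lemma Phi_eq {b : ℝ} (hb : 0 ≤ b) : Phi b = ∫ v in (0:ℝ)..b, ev v := by
  rw [Phi, intervalIntegral.integral_of_le hb]

lemma Phi_neg {b : ℝ} (hb : b ≤ 0) : Phi b = 0 := by
  rw [Phi, Ioc_eq_empty (by simpa using hb)]; simp

lemma Phi_cont : Continuous Phi := by
  have h : Phi = fun b => ∫ v in (0:ℝ)..(max b 0), ev v := by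
    ext b
    rcases le_total b 0 with hb | hb
    · rw [Phi_neg hb, max_eq_right hb]; simp
    · rw [Phi_eq hb, max_eq_left hb]
  rw [h]
  exact (intervalIntegral.continuous_primitive ev_ii 0).comp (by fun_prop : Continuous fun b : ℝ => max b 0)

lemma Phi_bound {b : ℝ} (hb : 0 ≤ b) : |Phi b| ≤ 8 * Real.exp b := by
  rw [Phi_eq hb]
  have h1 : ‖∫ v in (0:ℝ)..b, ev v‖ ≤ ∫ v in (0:ℝ)..b, 8 * Real.exp v := by
    apply intervalIntegral.norm_integral_le_of_norm_le hb
    · refine Eventually.of_forall fun v hv => ?_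
      exact ev_bound hv.1
    · exact (by fun_prop : Continuous fun v => 8 * Real.exp v).intervalIntegrable _ _
  rw [intervalIntegral.integral_const_mul, integral_exp] at h1
  simp only [Real.norm_eq_abs, Real.exp_zero] at h1
  linarith

lemma laplace_ev {s : ℂ} (hs : 1 < s.re) : ∫ v in Ioi (0:ℝ), (ev v : ℂ) * cexp (-s * v) = GG s / s := by
  have hs0 : s ≠ 0 := by rintro rfl; simp at hs; linarith
  have h1 := psi_rep hs le_rfl psi_bound1
  have h2 : GG s = s * HH (fun t : ℝ => ((Chebyshev.psi t - t : ℝ) : ℂ)) s := by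
    rw [GG_eq hs, h1]; ring
  rw [h2, mul_div_cancel_left₀ _ hs0, HH]
  have him : Real.exp '' Ioi 0 = Ioi 1 := by
    ext t
    simp only [mem_image, mem_Ioi]
    constructor
    · rintro ⟨x, hx, rfl⟩; simpa using hx
    · intro ht; exact ⟨Real.log t, Real.log_pos ht, Real.exp_log (by linarith)⟩
  rw [← him, integral_image_eq_integral_abs_deriv_smul measurableSet_Ioi
    (fun x _ => (Real.hasDerivAt_exp x).hasDerivWithinAt) Real.exp_injective.injOn]
  apply setIntegral_congr_fun measurableSet_Ioi
  intro v _
  have hne : ((Real.exp v : ℝ) : ℂ) ≠ 0 := by exact_mod_cast (Real.exp_pos v).ne'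
  have e1 : ((Real.exp v : ℝ) : ℂ) ^ (-(s + 1)) = cexp (-s * v) * cexp (-v) := by
    rw [cpow_def_of_ne_zero hne, ← ofReal_log (Real.exp_pos v).le, Real.log_exp, ← Complex.exp_add]
    congr 1; ring
  simp only [abs_of_pos (Real.exp_pos v)]
  rw [e1, real_smul, ev]
  have e2 : ((Real.exp v : ℝ) : ℂ) * cexp (-v) = 1 := by
    rw [ofReal_exp, ← Complex.exp_add]; simp
  linear_combination (-((Chebyshev.psi (Real.exp v) - Real.exp v : ℝ) : ℂ) * cexp (-s * v)) * e2

/-- the two-variable function for Fubini -/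
noncomputable def fub (s : ℂ) (v b : ℝ) : ℂ := if 0 < v ∧ v ≤ b then (ev v : ℂ) * cexp (-s * b) else 0

lemma fub_int {s : ℂ} (hs : s.re = 2) : Integrable (Function.uncurry (fub s)) (volume.prod volume) := by
  have hg : Integrable ((Ioi (0:ℝ)).indicator (fun v : ℝ => Real.exp (-(1/2) * v))) := by
    rw [integrable_indicator_iff measurableSet_Ioi]
    exact integrableOn_exp_mul_Ioi (by norm_num) 0
  have hgg := (hg.mul_prod hg).const_mul 8
  refine hgg.mono' ?_ ?_
  · apply Measurable.aestronglyMeasurable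
    unfold Function.uncurry fub
    apply Measurable.ite
    · exact (measurableSet_lt measurable_const measurable_fst).inter (measurableSet_le measurable_fst measurable_snd)
    · have := ev_meas
      fun_prop
    · exact measurable_const
  · refine Eventually.of_forall fun p => ?_
    obtain ⟨v, b⟩ := p
    simp only [Function.uncurry, fub]
    split_ifs with h
    · have hb : 0 < b := h.1.trans_le h.2
      simp only [indicator, mem_Ioi, h.1, hb, if_true]
      rw [norm_mul, Complex.norm_real, Complex.norm_exp, Real.norm_eq_abs]
      have e : (-s * (b:ℂ)).re = -2 * b := by simp [hs]
      rw [e]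
      calc _ ≤ 8 * Real.exp v * Real.exp (-2 * b) := by gcongr; exact ev_bound h.1
        _ = 8 * Real.exp (v + -2 * b) := by rw [mul_assoc, ← Real.exp_add]
        _ ≤ 8 * Real.exp (-(1/2) * v + -(1/2) * b) := by gcongr 8 * Real.exp ?_; linarith [h.2]
        _ = _ := by rw [Real.exp_add]
    · simp only [norm_zero]
      have h0 : ∀ x : ℝ, 0 ≤ (Ioi (0:ℝ)).indicator (fun v : ℝ => Real.exp (-(1/2) * v)) x :=
        fun x => indicator_nonneg (fun _ _ => (Real.exp_pos _).le) x
      exact mul_nonneg (by norm_num) (mul_nonneg (h0 _) (h0 _))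

lemma laplace_Phi {s : ℂ} (hs : s.re = 2) : ∫ b : ℝ, (Phi b : ℂ) * cexp (-s * b) = GG s / s ^ 2 := by
  have hs0 : s ≠ 0 := by rintro rfl; simp at hs
  have h1 : ∀ b : ℝ, ∫ v, fub s v b = (Phi b : ℂ) * cexp (-s * b) := by
    intro b
    rw [Phi, ← integral_complex_ofReal, ← integral_mul_const, ← integral_indicator measurableSet_Ioc]
    congr 1; ext v
    simp [fub, indicator, mem_Ioc]
  have h2 : ∀ v : ℝ, ∫ b, fub s v b = (Ioi (0:ℝ)).indicator (fun v : ℝ => (ev v : ℂ) * cexp (-s * v) / s) v := by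
    intro v
    by_cases hv : 0 < v
    · have : ∀ b, fub s v b = (Ici v).indicator (fun b : ℝ => (ev v : ℂ) * cexp (-s * b)) b := by
        intro b; simp [fub, indicator, hv]
      simp only [this]
      rw [integral_indicator measurableSet_Ici, integral_Ici_eq_integral_Ioi, integral_const_mul,
        integral_exp_mul_complex_Ioi (by simp [hs])]
      simp only [indicator, mem_Ioi, hv, if_true]
      field_simp
    · simp [fub, indicator, hv]
  have h3 := integral_integral_swap (fub_int hs)
  simp only [h1, h2] at h3
  rw [← h3, integral_indicator measurableSet_Ioi, integral_div, laplace_ev (by rw [hs]; norm_num)]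
  field_simp

lemma F_int : Integrable (fun b : ℝ => (Phi b : ℂ) * cexp (-2 * b)) := by
  have hg : Integrable ((Ioi (0:ℝ)).indicator (fun v : ℝ => 8 * Real.exp (-1 * v))) := by
    rw [integrable_indicator_iff measurableSet_Ioi]
    exact (integrableOn_exp_mul_Ioi (by norm_num) 0).const_mul 8
  refine hg.mono' ?_ ?_
  · apply Continuous.aestronglyMeasurable
    have := Phi_cont
    fun_prop
  · refine Eventually.of_forall fun b => ?_
    by_cases hb : 0 < b
    · simp only [indicator, mem_Ioi, hb, if_true]
      rw [norm_mul, Complex.norm_real, Complex.norm_exp, Real.norm_eq_abs]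
      have e : (-2 * (b:ℂ)).re = -2 * b := by simp
      rw [e]
      calc _ ≤ 8 * Real.exp b * Real.exp (-2 * b) := by gcongr; exact Phi_bound hb.le
        _ = 8 * Real.exp (b + -2 * b) := by rw [mul_assoc, ← Real.exp_add]
        _ = _ := by congr 2; ring
    · simp [indicator, hb, Phi_neg (not_lt.1 hb)]

open FourierTransform in
lemma F_fourier (ξ : ℝ) : 𝓕 (fun b : ℝ => (Phi b : ℂ) * cexp (-2 * b)) ξ =
    GG (2 + (2 * Real.pi * ξ : ℝ) * I) / (2 + (2 * Real.pi * ξ : ℝ) * I) ^ 2 := by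
  rw [Real.fourier_real_eq_integral_exp_smul, ← laplace_Phi (by simp)]
  congr 1; ext b
  rw [smul_eq_mul, mul_left_comm, ← Complex.exp_add]
  congr 2
  push_cast; ring

lemma GG2_int (hRH : RiemannHypothesis) : Integrable (fun t : ℝ => GG (2 + t * I) / (2 + t * I) ^ 2) := by
  obtain ⟨M, hM, h⟩ := GG_sqrt hRH (σ := 2) (by norm_num)
  apply line_int (F := fun s => GG s / s ^ 2) (a := 2) (M := 4 * M)
  · intro t
    have hne : ((2:ℝ) + t * I : ℂ) ≠ 0 := by
      intro h; have := congrArg Complex.re h; simp at this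
    exact (GG_diff hRH (by simp; norm_num)).continuousAt.div (by fun_prop) (pow_ne_zero _ hne)
  · intro t
    have h1 := h (((2:ℝ):ℂ) + t * I) (by simp)
    have e : (((2:ℝ):ℂ) + t * I).im = t := by simp
    rw [e] at h1
    have h2 : (1 + |t|) / 2 ≤ ‖(((2:ℝ):ℂ) + t * I)‖ := by
      have h3 := Complex.abs_im_le_norm (((2:ℝ):ℂ) + t * I)
      have h4 := Complex.abs_re_le_norm (((2:ℝ):ℂ) + t * I)
      rw [e] at h3
      simp at h4
      have : ‖(((2:ℝ):ℂ) + t * I)‖ = ‖(2 + t * I : ℂ)‖ := by simp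
      linarith
    rw [norm_div, norm_pow, ← half_div_sq (by positivity)]
    calc _ ≤ (M * (1 + |t|) ^ (1/2:ℝ)) / ((1 + |t|) / 2) ^ 2 := by gcongr
      _ = _ := by field_simp; norm_num

open FourierTransform in
lemma Phi_inv (hRH : RiemannHypothesis) (b : ℝ) :
    (Phi b : ℂ) = 1 / (2 * Real.pi) * ∫ t : ℝ, cexp (b * (2 + t * I)) * (GG (2 + t * I) / (2 + t * I) ^ 2) := by
  have hc : Continuous (fun b : ℝ => (Phi b : ℂ) * cexp (-2 * b)) := by
    have := Phi_cont
    fun_prop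
  have hi : Integrable (𝓕 (fun b : ℝ => (Phi b : ℂ) * cexp (-2 * b))) := by
    have h1 : 𝓕 (fun b : ℝ => (Phi b : ℂ) * cexp (-2 * b)) = fun ξ : ℝ =>
      (fun t : ℝ => GG (2 + t * I) / (2 + t * I) ^ 2) (2 * Real.pi * ξ) := by
      ext ξ; rw [F_fourier]
    rw [h1]
    exact (GG2_int hRH).comp_mul_left' (by positivity)
  have h := congrFun (hc.fourierInv_fourier_eq F_int hi) b
  rw [Real.fourierInv_eq'] at h
  have e : ∀ ξ : ℝ, cexp (↑(2 * Real.pi * inner ℝ ξ b) * I) • 𝓕 (fun b : ℝ => (Phi b : ℂ) * cexp (-2 * b)) ξ =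
      cexp (-2 * b) * (fun t : ℝ => cexp (b * (2 + t * I)) * (GG (2 + t * I) / (2 + t * I) ^ 2)) (2 * Real.pi * ξ) := by
    intro ξ
    rw [F_fourier, smul_eq_mul]
    show _ = cexp (-2 * b) * (cexp (b * (2 + ((2 * Real.pi * ξ : ℝ) : ℂ) * I)) * _)
    rw [← mul_assoc, ← Complex.exp_add]
    congr 2
    simp; ring
  simp only [e] at h
  rw [integral_const_mul, Measure.integral_comp_mul_left (fun t : ℝ => cexp (b * (2 + t * I)) * (GG (2 + t * I) / (2 + t * I) ^ 2)) (2 * Real.pi), mul_comm] at h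
  have h5 := mul_right_cancel₀ (Complex.exp_ne_zero _) h
  rw [← h5, abs_of_pos (by positivity), real_smul]
  congr 1
  push_cast; simp

lemma main_formula (hRH : RiemannHypothesis) {u h : ℝ} (hh : 0 < h) :
    (((Phi (u + h) - Phi u) / h - Phi 1 : ℝ) : ℂ) =
      1 / (2 * Real.pi) * ∫ t : ℝ, GG ((2:ℝ) + t * I) * KK u h ((2:ℝ) + t * I) := by
  have hP : ∀ b : ℝ, Integrable (fun t : ℝ => cexp (b * (2 + t * I)) * (GG (2 + t * I) / (2 + t * I) ^ 2)) := by
    intro b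
    refine (GG2_int hRH).bdd_mul (c := Real.exp (b * 2)) (by fun_prop) (Eventually.of_forall fun t => ?_)
    rw [Complex.norm_exp]; simp
  have h0 : Phi 0 = 0 := Phi_neg le_rfl
  have e : (((Phi (u + h) - Phi u) / h - Phi 1 : ℝ) : ℂ) = ((Phi (u + h) : ℂ) - Phi u) / h - (Phi 1 - Phi 0) := by
    rw [h0]; push_cast; ring
  rw [e, Phi_inv hRH (u + h), Phi_inv hRH u, Phi_inv hRH 1, Phi_inv hRH 0]
  rw [← mul_sub, ← mul_sub, mul_div_assoc, ← mul_sub]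
  congr 1
  have hA : Integrable (fun t : ℝ => (cexp (((u + h : ℝ) : ℂ) * (2 + t * I)) * (GG (2 + t * I) / (2 + t * I) ^ 2) -
      cexp (u * (2 + t * I)) * (GG (2 + t * I) / (2 + t * I) ^ 2)) / (h : ℂ)) := ((hP (u + h)).sub (hP u)).div_const _
  have hB : Integrable (fun t : ℝ => cexp (((1 : ℝ) : ℂ) * (2 + t * I)) * (GG (2 + t * I) / (2 + t * I) ^ 2) -
      cexp (((0 : ℝ) : ℂ) * (2 + t * I)) * (GG (2 + t * I) / (2 + t * I) ^ 2)) := (hP 1).sub (hP 0)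
  rw [← integral_sub (hP _) (hP _), ← integral_sub (hP _) (hP _), ← integral_div, ← integral_sub hA hB]
  congr 1; ext t
  have hne : ((2:ℝ) + t * I : ℂ) ≠ 0 := by
    intro h; have := congrArg Complex.re h; simp at this
  rw [KK_eq hh.ne' hne, BB]
  push_cast at hne ⊢
  simp
  ring

end VonKoch

end

section

open Complex Set MeasureTheory Filter Topology
namespace VonKoch

lemma sum_pow_le {ε : ℝ} (hε : 0 < ε) (N : ℕ) :
    ∑ k ∈ Finset.range (N + 1), (1 + (k:ℝ)) ^ (-1 - ε) ≤ 1 + 1 / ε - 1 / ε * ((N:ℝ) + 1) ^ (-ε) := by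
  induction N with
  | zero => simp
  | succ N ih =>
    rw [Finset.sum_range_succ]
    set y : ℝ := (N:ℝ) + 1 with hy
    have hy0 : 0 < y := by positivity
    have hy1 : 0 < y + 1 := by positivity
    have key : (1 + ((N + 1 : ℕ):ℝ)) ^ (-1 - ε) ≤ 1 / ε * (y ^ (-ε) - (y + 1) ^ (-ε)) := by
      have e0 : (1 + ((N + 1 : ℕ):ℝ)) = y + 1 := by push_cast; rw [hy]; ring
      rw [e0]
      have e1 : (y + 1) ^ (-1 - ε) = (y + 1) ^ (-ε) * (1 / (y + 1)) := by
        rw [show (-1 - ε) = -ε + (-1) by ring, Real.rpow_add hy1, Real.rpow_neg_one, one_div]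
      have e2 : y ^ (-ε) = (y + 1) ^ (-ε) * Real.exp (ε * Real.log ((y + 1) / y)) := by
        rw [Real.log_div hy1.ne' hy0.ne', Real.rpow_def_of_pos hy0, Real.rpow_def_of_pos hy1, ← Real.exp_add]
        congr 1; ring
      have e3 : 1 / (y + 1) ≤ Real.log ((y + 1) / y) := by
        have := Real.one_sub_inv_le_log_of_pos (x := (y + 1) / y) (by positivity)
        refine le_trans (le_of_eq ?_) this
        field_simp; ring
      have e4 : ε * (1 / (y + 1)) + 1 ≤ Real.exp (ε * Real.log ((y + 1) / y)) :=
        le_trans (by gcongr) (Real.add_one_le_exp _)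
      rw [e1, e2]
      have hp : 0 < (y + 1) ^ (-ε) := Real.rpow_pos_of_pos hy1 _
      calc _ = 1 / ε * ((y + 1) ^ (-ε) * (ε * (1 / (y + 1)) + 1) - (y + 1) ^ (-ε)) := by field_simp; ring
        _ ≤ _ := by gcongr
    have e5 : ((N + 1 : ℕ) : ℝ) + 1 = y + 1 := by push_cast; rfl
    rw [e5]
    have : 1 / ε * (y ^ (-ε) - (y + 1) ^ (-ε)) = 1 / ε * y ^ (-ε) - 1 / ε * (y + 1) ^ (-ε) := by ring
    linarith

lemma sum_pow_le' {ε : ℝ} (hε : 0 < ε) (N : ℕ) :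
    ∑ k ∈ Finset.range N, (1 + (k:ℝ)) ^ (-1 - ε) ≤ 1 + 1 / ε := by
  have h1 := sum_pow_le hε N
  rw [Finset.sum_range_succ] at h1
  have h2 : 0 ≤ (1 + (N:ℝ)) ^ (-1 - ε) := by positivity
  have h3 : 0 ≤ 1 / ε * ((N:ℝ) + 1) ^ (-ε) := by positivity
  linarith

lemma exp_32 : Real.exp (3 / 2) ≤ 9 := by
  have h1 : Real.exp (3/2) ≤ Real.exp 2 := Real.exp_le_exp.2 (by norm_num)
  have h2 : Real.exp 2 = Real.exp 1 * Real.exp 1 := by rw [← Real.exp_add]; norm_num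
  have h3 := Real.exp_one_lt_d9
  have h4 := Real.exp_pos 1
  nlinarith

lemma exp_sub_one_pow {z : ℂ} {δ : ℝ} (hδ : 0 ≤ δ) (hδ1 : δ ≤ 1) (hz : z.re ≤ 3 / 2) :
    ‖cexp z - 1‖ ≤ 10 * ‖z‖ ^ (1 - δ) := by
  rcases le_total ‖z‖ 1 with h | h
  · have h1 := Complex.norm_exp_sub_one_le h
    have h2 : ‖z‖ ≤ ‖z‖ ^ (1 - δ) := by
      rcases (norm_nonneg z).eq_or_lt with h0 | h0
      · rw [← h0]; positivity
      · calc ‖z‖ = ‖z‖ ^ (1:ℝ) := by simp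
          _ ≤ _ := Real.rpow_le_rpow_of_exponent_ge h0 h (by linarith)
    have := norm_nonneg z
    linarith
  · have h1 : ‖cexp z - 1‖ ≤ Real.exp z.re + 1 := (norm_sub_le _ _).trans (by rw [Complex.norm_exp]; simp)
    have h2 : Real.exp z.re ≤ Real.exp (3/2) := Real.exp_le_exp.2 hz
    have h3 : 1 ≤ ‖z‖ ^ (1 - δ) := Real.one_le_rpow h (by linarith)
    have := exp_32
    linarith

lemma KK_bound {u : ℝ} (hu : 1 ≤ u) (t : ℝ) :
    ‖KK u (Real.exp (-u / 2)) (((1 / 2 + 1 / u : ℝ) : ℂ) + t * I)‖ ≤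
      1920 * Real.exp (u / 2) * (1 + |t|) ^ (-1 - 1 / u) := by
  have hu0 : 0 < u := by linarith
  set h := Real.exp (-u / 2) with hh
  set δ := 1 / u with hδ
  have hδ0 : 0 < δ := by positivity
  have hδ1 : δ ≤ 1 := by rw [hδ, div_le_one hu0]; exact hu
  have hhp : 0 < h := Real.exp_pos _
  have hh1 : h ≤ 1 := by rw [hh]; apply Real.exp_le_one_iff.2; linarith
  set s : ℂ := ((1 / 2 + δ : ℝ) : ℂ) + t * I with hs
  have hre : s.re = 1 / 2 + δ := by rw [hs]; simp
  have him : s.im = t := by rw [hs]; simp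
  have hn1 : 1 / 2 ≤ ‖s‖ := by
    have := Complex.re_le_norm s; linarith
  have hn2 : |t| ≤ ‖s‖ := by
    have := Complex.abs_im_le_norm s; rwa [him] at this
  have hn3 : (1 + |t|) / 4 ≤ ‖s‖ := by linarith
  have hsp : 0 < ‖s‖ := by linarith
  have hs0 : s ≠ 0 := norm_pos_iff.1 hsp
  have hB : ‖BB u h s‖ ≤ 120 * Real.exp (u / 2) * ‖s‖ ^ (1 - δ) := by
    have e1 : BB u h s = cexp (u * s) * (cexp (h * s) - 1) / h - (cexp s - 1) := by
      rw [BB, add_mul, Complex.exp_add]; ring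
    have e2 : ‖cexp (u * s)‖ = Real.exp (u / 2) * Real.exp 1 := by
      rw [Complex.norm_exp, ← Real.exp_add]
      congr 1
      have : (u * s : ℂ).re = u * s.re := by simp
      rw [this, hre, hδ]; field_simp
    have e3 : ‖cexp (h * s) - 1‖ / h ≤ 10 * (Real.exp (1/2) * ‖s‖ ^ (1 - δ)) := by
      have := exp_sub_one_pow (z := h * s) hδ0.le hδ1 (by
        have : (h * s : ℂ).re = h * s.re := by simp
        rw [this, hre]; nlinarith)
      rw [norm_mul, Complex.norm_real, Real.norm_of_nonneg hhp.le, Real.mul_rpow hhp.le hsp.le] at this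
      have e4 : h ^ (1 - δ) = h * Real.exp (1/2) := by
        rw [Real.rpow_sub hhp, Real.rpow_one, div_eq_mul_inv, ← Real.rpow_neg hhp.le, hh, ← Real.exp_mul]
        congr 2
        rw [hδ]; field_simp
      rw [e4] at this
      rw [div_le_iff₀ hhp]
      linarith
    have e5 : ‖cexp s - 1‖ ≤ 10 * ‖s‖ ^ (1 - δ) := exp_sub_one_pow hδ0.le hδ1 (by linarith)
    have e6 : Real.exp 1 * Real.exp (1/2) ≤ 9 := by
      rw [← Real.exp_add]; refine le_trans (le_of_eq ?_) exp_32; norm_num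
    have e7 : 1 ≤ Real.exp (u / 2) := Real.one_le_exp (by linarith)
    have hq : 0 ≤ ‖s‖ ^ (1 - δ) := by positivity
    rw [e1]
    refine (norm_sub_le _ _).trans ?_
    rw [norm_div, norm_mul, e2, Complex.norm_real, Real.norm_of_nonneg hhp.le, mul_div_assoc]
    calc _ ≤ Real.exp (u / 2) * Real.exp 1 * (10 * (Real.exp (1/2) * ‖s‖ ^ (1 - δ))) + 10 * ‖s‖ ^ (1 - δ) := by gcongr
      _ = 10 * (Real.exp (u/2) * ‖s‖ ^ (1 - δ)) * (Real.exp 1 * Real.exp (1/2)) + 10 * (1 * ‖s‖ ^ (1 - δ)) := by ring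
      _ ≤ 10 * (Real.exp (u/2) * ‖s‖ ^ (1 - δ)) * 9 + 10 * (Real.exp (u/2) * ‖s‖ ^ (1 - δ)) := by gcongr
      _ ≤ _ := by
        have : 0 ≤ Real.exp (u/2) * ‖s‖ ^ (1 - δ) := by positivity
        linarith
  have e8 : ‖s‖ ^ (1 - δ) / ‖s‖ ^ 2 = ‖s‖ ^ (-1 - δ) := by
    rw [← Real.rpow_natCast, ← Real.rpow_sub hsp]; congr 1; push_cast; ring
  have e9 : ‖s‖ ^ (-1 - δ) ≤ 16 * (1 + |t|) ^ (-1 - δ) := by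
    calc _ ≤ ((1 + |t|) / 4) ^ (-1 - δ) := Real.rpow_le_rpow_of_nonpos (by positivity) hn3 (by linarith)
      _ = (4:ℝ) ^ (1 + δ) * (1 + |t|) ^ (-1 - δ) := by
        rw [Real.div_rpow (by positivity) (by norm_num), show (-1 - δ) = -(1 + δ) by ring,
          Real.rpow_neg (by norm_num : (0:ℝ) ≤ 4), div_inv_eq_mul, mul_comm]
      _ ≤ _ := by
        gcongr
        calc (4:ℝ) ^ (1 + δ) ≤ 4 ^ (2:ℝ) := Real.rpow_le_rpow_of_exponent_le (by norm_num) (by linarith)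
          _ = 16 := by norm_num
  rw [KK_eq hhp.ne' hs0, norm_div, norm_pow]
  calc _ ≤ 120 * Real.exp (u / 2) * ‖s‖ ^ (1 - δ) / ‖s‖ ^ 2 := by gcongr
    _ = 120 * Real.exp (u / 2) * ‖s‖ ^ (-1 - δ) := by rw [mul_div_assoc, e8]
    _ ≤ 120 * Real.exp (u / 2) * (16 * (1 + |t|) ^ (-1 - δ)) := by gcongr
    _ = _ := by ring

end VonKoch

end

section

open Complex Set MeasureTheory Filter Topology
namespace VonKoch

lemma win_bound (hRH : RiemannHypothesis) : ∃ c : ℝ, 0 < c ∧ ∀ u : ℝ, 1 ≤ u → ∀ (k : ℕ) (a : ℝ),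
    |a| ≤ k + 1 → (∀ t ∈ Icc a (a + 1), (k:ℝ) ≤ |t|) →
    ∫ t in a..(a+1), |(GG (((1 / 2 + 1 / u : ℝ) : ℂ) + t * I)).re *
        (KK u (Real.exp (-u / 2)) (((1 / 2 + 1 / u : ℝ) : ℂ) + t * I)).re| ≤
      c * Real.exp (u / 2) * u * (1 + (k:ℝ)) ^ (-1 - 1 / (2 * u)) := by
  obtain ⟨c, hc, hG⟩ := GG_re_int hRH
  refine ⟨1920 * c * 6, by positivity, fun u hu k a ha hk => ?_⟩
  have hu0 : 0 < u := by linarith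
  have hσ : (1:ℝ) / 2 < 1 / 2 + 1 / u := lt_add_of_pos_right _ (by positivity)
  have hd1 : 1 / u ≤ 1 := by rw [div_le_one hu0]; exact hu
  set σ : ℝ := 1 / 2 + 1 / u with hσd
  set h := Real.exp (-u / 2) with hh
  have hGc : Continuous (fun t : ℝ => (GG (σ + t * I)).re) := by
    apply Complex.continuous_re.comp
    rw [continuous_iff_continuousAt]
    intro t
    have h1 : ContinuousAt GG (σ + t * I) := (GG_diff hRH (by simpa using hσ)).continuousAt
    exact ContinuousAt.comp (f := fun t : ℝ => (σ + t * I : ℂ)) h1 (by fun_prop)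
  have hKc : Continuous (fun t : ℝ => (KK u h (σ + t * I)).re) :=
    Complex.continuous_re.comp ((KK_diff u h).continuous.comp (by fun_prop))
  set B : ℝ := 1920 * Real.exp (u / 2) * (1 + (k:ℝ)) ^ (-1 - 1 / u) with hB
  have hBp : 0 ≤ B := by positivity
  have hpt : ∀ t ∈ Icc a (a + 1), |(GG (σ + t * I)).re * (KK u h (σ + t * I)).re| ≤ B * |(GG (σ + t * I)).re| := by
    intro t ht
    rw [abs_mul, mul_comm]
    gcongr
    refine (Complex.abs_re_le_norm _).trans ((KK_bound hu t).trans ?_)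
    rw [hB]
    have := hk t ht
    gcongr 1920 * Real.exp (u / 2) * ?_
    refine Real.rpow_le_rpow_of_nonpos (by positivity) (by linarith) ?_
    have : 0 < 1 / u := by positivity
    linarith
  have h1 : ∫ t in a..(a+1), |(GG (σ + t * I)).re * (KK u h (σ + t * I)).re| ≤
      ∫ t in a..(a+1), B * |(GG (σ + t * I)).re| := by
    apply intervalIntegral.integral_mono_on (by linarith)
    · exact (hGc.mul hKc).abs.intervalIntegrable _ _
    · exact (hGc.abs.const_mul B).intervalIntegrable _ _
    · exact hpt
  rw [intervalIntegral.integral_const_mul] at h1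
  have h2 := hG σ a hσ (by linarith)
  have hlog : Real.log (|a| + 2) ≤ 6 * u * (1 + (k:ℝ)) ^ (1 / (2 * u)) := by
    have e1 : Real.log (|a| + 2) ≤ (|a| + 2) ^ (1 / (2 * u)) / (1 / (2 * u)) :=
      Real.log_le_rpow_div (by positivity) (by positivity)
    have e2 : (|a| + 2) ^ (1 / (2 * u)) ≤ (3 * (1 + (k:ℝ))) ^ (1 / (2 * u)) := by
      apply Real.rpow_le_rpow (by positivity) _ (by positivity)
      have : (0:ℝ) ≤ k := by positivity
      linarith
    have e3 : (3:ℝ) ^ (1 / (2 * u)) ≤ 3 := by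
      calc (3:ℝ) ^ (1 / (2 * u)) ≤ 3 ^ (1:ℝ) := by
            apply Real.rpow_le_rpow_of_exponent_le (by norm_num)
            rw [div_le_one (by positivity)]; linarith
        _ = 3 := by simp
    rw [Real.mul_rpow (by norm_num) (by positivity)] at e2
    calc _ ≤ _ := e1
      _ = (|a| + 2) ^ (1 / (2 * u)) * (2 * u) := by field_simp
      _ ≤ (3 * (1 + (k:ℝ)) ^ (1 / (2 * u))) * (2 * u) := by
        gcongr
        exact e2.trans (by gcongr)
      _ = _ := by ring
  have hpow : (1 + (k:ℝ)) ^ (-1 - 1 / u) * (1 + (k:ℝ)) ^ (1 / (2 * u)) = (1 + (k:ℝ)) ^ (-1 - 1 / (2 * u)) := by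
    rw [← Real.rpow_add (by positivity)]
    congr 1; field_simp; ring
  calc _ ≤ _ := h1
    _ ≤ B * (c * (6 * u * (1 + (k:ℝ)) ^ (1 / (2 * u)))) := by
      gcongr
      exact h2.trans (by gcongr)
    _ = 1920 * c * 6 * Real.exp (u / 2) * u * ((1 + (k:ℝ)) ^ (-1 - 1 / u) * (1 + (k:ℝ)) ^ (1 / (2 * u))) := by
      rw [hB]; ring
    _ = _ := by rw [hpow]

lemma int_bound (hRH : RiemannHypothesis) : ∃ c : ℝ, 0 < c ∧ ∀ u : ℝ, 1 ≤ u →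
    |∫ t : ℝ, (GG (((1 / 2 + 1 / u : ℝ) : ℂ) + t * I)).re *
        (KK u (Real.exp (-u / 2)) (((1 / 2 + 1 / u : ℝ) : ℂ) + t * I)).re| ≤ c * Real.exp (u / 2) * u ^ 2 := by
  obtain ⟨c, hc, hw⟩ := win_bound hRH
  refine ⟨6 * c, by positivity, fun u hu => ?_⟩
  have hu0 : 0 < u := by linarith
  have hσ : (1:ℝ) / 2 < 1 / 2 + 1 / u := lt_add_of_pos_right _ (by positivity)
  specialize hw u hu
  set σ : ℝ := 1 / 2 + 1 / u with hσd
  set h := Real.exp (-u / 2) with hh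
  have hGc : Continuous (fun t : ℝ => (GG (σ + t * I)).re) := by
    apply Complex.continuous_re.comp
    rw [continuous_iff_continuousAt]
    intro t
    have h1 : ContinuousAt GG (σ + t * I) := (GG_diff hRH (by simpa using hσ)).continuousAt
    exact ContinuousAt.comp (f := fun t : ℝ => (σ + t * I : ℂ)) h1 (by fun_prop)
  have hKc : Continuous (fun t : ℝ => (KK u h (σ + t * I)).re) :=
    Complex.continuous_re.comp ((KK_diff u h).continuous.comp (by fun_prop))
  set f : ℝ → ℝ := fun t => |(GG (σ + t * I)).re * (KK u h (σ + t * I)).re| with hf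
  have hfc : Continuous f := (hGc.mul hKc).abs
  have hfi : Integrable f := by
    refine (line_integrable hRH hu0.le (Real.exp_pos (-u / 2)) hσ).norm.mono' hfc.aestronglyMeasurable
      (Eventually.of_forall fun t => ?_)
    rw [hf, norm_mul, Real.norm_eq_abs, abs_abs, abs_mul]
    gcongr <;> exact Complex.abs_re_le_norm _
  set E := c * Real.exp (u / 2) * u with hE
  have hEp : 0 ≤ E := by positivity
  have hfin : ∀ N : ℕ, ∫ t in (-(N:ℝ))..(N:ℝ), f t ≤ 2 * E * ∑ k ∈ Finset.range N, (1 + (k:ℝ)) ^ (-1 - 1 / (2 * u)) := by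
    intro N
    induction N with
    | zero => simp
    | succ N ih =>
      have hii : ∀ a b : ℝ, IntervalIntegrable f volume a b := fun a b => hfc.intervalIntegrable a b
      have hN : (0:ℝ) ≤ N := by positivity
      have w1 := hw N N (by rw [abs_of_nonneg hN]; linarith) (fun t ht => ht.1.trans (le_abs_self t))
      have w2 := hw N (-((N:ℝ) + 1)) (by rw [abs_neg, abs_of_nonneg (by linarith)]) (fun t ht => by
        have := ht.2
        exact le_trans (by linarith) (neg_le_abs t))
      rw [show -((N:ℝ) + 1) + 1 = -(N:ℝ) by ring] at w2
      rw [Finset.sum_range_succ]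
      have e := intervalIntegral.integral_add_adjacent_intervals
        (hii (-((N:ℝ) + 1)) N)
        (hii N (N + 1))
      have e' := intervalIntegral.integral_add_adjacent_intervals (hii (-((N:ℝ) + 1)) (-N)) (hii (-N) N)
      push_cast
      rw [← e, ← e', mul_add]
      linarith
  have hsum := fun N => sum_pow_le' (ε := 1 / (2 * u)) (by positivity) N
  have hfin2 : ∀ N : ℕ, ∫ t in (-(N:ℝ))..(N:ℝ), f t ≤ 2 * E * (3 * u) := by
    intro N
    refine (hfin N).trans ?_
    gcongr
    refine (hsum N).trans ?_
    rw [one_div_one_div]; linarith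
  have hlim : Tendsto (fun N : ℕ => ∫ t in (-(N:ℝ))..(N:ℝ), f t) atTop (𝓝 (∫ t, f t)) :=
    intervalIntegral_tendsto_integral hfi
      (tendsto_neg_atTop_atBot.comp tendsto_natCast_atTop_atTop) tendsto_natCast_atTop_atTop
  have h1 : ∫ t, f t ≤ 2 * E * (3 * u) := le_of_tendsto hlim (Eventually.of_forall hfin2)
  refine (abs_integral_le_integral_abs).trans (h1.trans (le_of_eq ?_))
  rw [hE]; ring

lemma A_bound (hRH : RiemannHypothesis) : ∃ c : ℝ, 0 < c ∧ ∀ u : ℝ, 1 ≤ u →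
    |(Phi (u + Real.exp (-u / 2)) - Phi u) / Real.exp (-u / 2)| ≤ c * Real.exp (u / 2) * u ^ 2 := by
  obtain ⟨c, hc, hi⟩ := int_bound hRH
  refine ⟨c + |Phi 1|, by positivity, fun u hu => ?_⟩
  have hu0 : 0 < u := by linarith
  have hd1 : 1 / u ≤ 1 := by rw [div_le_one hu0]; exact hu
  have hd0 : 0 < 1 / u := by positivity
  have h1 := main_formula hRH (u := u) (Real.exp_pos (-u / 2))
  have h2 := symm_formula hRH hu0.le (Real.exp_pos (-u / 2)) (σ := 1 / 2 + 1 / u) (by linarith) (by linarith)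
  have h3 := hi u hu
  set J := ∫ t : ℝ, (GG (((1 / 2 + 1 / u : ℝ) : ℂ) + t * I)).re *
        (KK u (Real.exp (-u / 2)) (((1 / 2 + 1 / u : ℝ) : ℂ) + t * I)).re
  have h4 : (Phi (u + Real.exp (-u / 2)) - Phi u) / Real.exp (-u / 2) - Phi 1 = 1 / Real.pi * J := by
    have := congrArg Complex.re h1
    rw [Complex.ofReal_re, show (1 / (2 * Real.pi) : ℂ) = ((1 / (2 * Real.pi) : ℝ) : ℂ) by push_cast; rfl,
      Complex.re_ofReal_mul, h2] at this
    rw [this]; field_simp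
  have h5 : |1 / Real.pi * J| ≤ |J| := by
    rw [abs_mul, abs_of_pos (by positivity)]
    have : 1 / Real.pi ≤ 1 := by rw [div_le_one Real.pi_pos]; linarith [Real.pi_gt_three]
    exact mul_le_of_le_one_left (abs_nonneg _) this
  have h6 : 1 ≤ Real.exp (u / 2) * u ^ 2 := by
    have a1 : 1 ≤ Real.exp (u / 2) := Real.one_le_exp (by linarith)
    have a2 : 1 ≤ u ^ 2 := by nlinarith
    nlinarith
  have h7 : (Phi (u + Real.exp (-u / 2)) - Phi u) / Real.exp (-u / 2) = 1 / Real.pi * J + Phi 1 := by linarith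
  rw [h7]
  calc _ ≤ |1 / Real.pi * J| + |Phi 1| := abs_add_le _ _
    _ ≤ c * Real.exp (u / 2) * u ^ 2 + |Phi 1| * (Real.exp (u / 2) * u ^ 2) := by
      gcongr
      · exact h5.trans h3
      · exact le_mul_of_one_le_right (abs_nonneg _) h6
    _ = _ := by ring

lemma A_sandwich {u h : ℝ} (hu : 0 ≤ u) (hh : 0 < h) :
    Chebyshev.psi (Real.exp u) - Real.exp (u + h) ≤ (Phi (u + h) - Phi u) / h ∧
    (Phi (u + h) - Phi u) / h ≤ Chebyshev.psi (Real.exp (u + h)) - Real.exp u := by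
  have e : Phi (u + h) - Phi u = ∫ v in u..(u + h), ev v := by
    rw [Phi_eq hu, Phi_eq (by linarith)]
    exact intervalIntegral.integral_interval_sub_left (ev_ii _ _) (ev_ii _ _)
  have ec : ∀ m : ℝ, ∫ _ in u..(u + h), m = h * m := by intro m; simp
  have m1 : ∀ v ∈ Icc u (u + h), Chebyshev.psi (Real.exp u) - Real.exp (u + h) ≤ ev v := fun v hv =>
    sub_le_sub (Chebyshev.psi_mono (Real.exp_le_exp.2 hv.1)) (Real.exp_le_exp.2 hv.2)
  have m2 : ∀ v ∈ Icc u (u + h), ev v ≤ Chebyshev.psi (Real.exp (u + h)) - Real.exp u := fun v hv =>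
    sub_le_sub (Chebyshev.psi_mono (Real.exp_le_exp.2 hv.2)) (Real.exp_le_exp.2 hv.1)
  rw [e]
  constructor
  · rw [le_div_iff₀ hh, mul_comm, ← ec]
    exact intervalIntegral.integral_mono_on (by linarith) (by simp) (ev_ii _ _) m1
  · rw [div_le_iff₀ hh, mul_comm _ h, ← ec]
    exact intervalIntegral.integral_mono_on (by linarith) (ev_ii _ _) (by simp) m2

lemma exp_shift {u : ℝ} (hu : 0 ≤ u) : Real.exp (u + Real.exp (-u / 2)) ≤ Real.exp u + 2 * Real.exp (u / 2) := by
  have h1 : Real.exp (-u / 2) ≤ 1 := Real.exp_le_one_iff.2 (by linarith)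
  have h0 := Real.exp_pos (-u / 2)
  have h2 : Real.exp (Real.exp (-u / 2)) ≤ 1 + 2 * Real.exp (-u / 2) := by
    have := Real.abs_exp_sub_one_le (x := Real.exp (-u / 2)) (by rw [abs_of_pos h0]; exact h1)
    rw [abs_of_pos h0] at this
    linarith [le_abs_self (Real.exp (Real.exp (-u / 2)) - 1)]
  have h3 : Real.exp u * Real.exp (-u / 2) = Real.exp (u / 2) := by rw [← Real.exp_add]; congr 1; ring
  rw [Real.exp_add]
  calc _ ≤ Real.exp u * (1 + 2 * Real.exp (-u / 2)) := by gcongr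
    _ = Real.exp u + 2 * (Real.exp u * Real.exp (-u / 2)) := by ring
    _ = _ := by rw [h3]

lemma psi_exp_bound (hRH : RiemannHypothesis) : ∃ c : ℝ, 0 < c ∧ ∀ w : ℝ, 2 ≤ w →
    |Chebyshev.psi (Real.exp w) - Real.exp w| ≤ c * Real.exp (w / 2) * w ^ 2 := by
  obtain ⟨c, hc, hA⟩ := A_bound hRH
  refine ⟨c + 2, by positivity, fun w hw => ?_⟩
  have mono : ∀ u : ℝ, 1 ≤ u → u ≤ w → c * Real.exp (u / 2) * u ^ 2 + 2 * Real.exp (u / 2) ≤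
      (c + 2) * Real.exp (w / 2) * w ^ 2 := by
    intro u hu huw
    have a1 : Real.exp (u / 2) ≤ Real.exp (w / 2) := Real.exp_le_exp.2 (by linarith)
    have a2 : u ^ 2 ≤ w ^ 2 := by gcongr
    have a3 : 1 ≤ w ^ 2 := by nlinarith
    calc _ ≤ c * Real.exp (w / 2) * w ^ 2 + 2 * Real.exp (w / 2) * 1 := by
          rw [mul_one]; gcongr
      _ ≤ c * Real.exp (w / 2) * w ^ 2 + 2 * Real.exp (w / 2) * w ^ 2 := by gcongr
      _ = _ := by ring
  rw [abs_le]
  constructor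
  · have hcont : ContinuousOn (fun u : ℝ => u + Real.exp (-u / 2)) (Icc (w - 1) w) := by fun_prop
    have hivt := intermediate_value_Icc (by linarith : w - 1 ≤ w) hcont
    obtain ⟨u, ⟨hu1, hu2⟩, hu3⟩ := hivt (show w ∈ _ from by
      constructor
      · have : Real.exp (-(w - 1) / 2) ≤ 1 := Real.exp_le_one_iff.2 (by linarith)
        linarith
      · have := Real.exp_pos (-w / 2)
        linarith)
    simp only at hu3
    have h1 := (A_sandwich (u := u) (by linarith) (Real.exp_pos (-u / 2))).2
    have h2 := neg_le_of_abs_le (hA u (by linarith))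
    have h3 := exp_shift (u := u) (by linarith)
    have h4 := mono u (by linarith) hu2
    rw [hu3] at h1 h2 h3
    linarith
  · have h1 := (A_sandwich (u := w) (by linarith) (Real.exp_pos (-w / 2))).1
    have h2 := le_of_abs_le (hA w (by linarith))
    have h3 := exp_shift (u := w) (by linarith)
    have h4 := mono w (by linarith) le_rfl
    linarith

lemma psi_of_rh (hRH : RiemannHypothesis) :
    ∃ C : ℝ, ∀ x : ℝ, x ≥ 2 → |Chebyshev.psi x - x| ≤ C * √x * Real.log x ^ 2 := by
  obtain ⟨c, hc, h⟩ := psi_exp_bound hRH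
  refine ⟨c + 512, fun x hx => ?_⟩
  have hx0 : 0 < x := by linarith
  have hl : 1 / 2 ≤ Real.log x := by
    have h1 := Real.log_two_gt_d9
    have : Real.log 2 ≤ Real.log x := Real.log_le_log (by norm_num) hx
    linarith
  have hs1 : 1 ≤ √x := by rw [Real.one_le_sqrt]; linarith
  rcases le_total 2 (Real.log x) with h2 | h2
  · have h3 := h _ h2
    rw [Real.exp_half, Real.exp_log hx0] at h3
    refine h3.trans ?_
    gcongr
    linarith
  · have h3 := psi_bound1 x (by linarith)
    rw [Complex.norm_real, Real.norm_eq_abs, Real.rpow_one] at h3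
    have h4 : x ≤ 16 := by
      have : x ≤ Real.exp 2 := by rwa [← Real.log_le_iff_le_exp hx0]
      have e2 : Real.exp 2 = Real.exp 1 * Real.exp 1 := by rw [← Real.exp_add]; norm_num
      have h3 := Real.exp_one_lt_d9
      have h4 := Real.exp_pos 1
      nlinarith
    have h5 : 1 / 4 ≤ Real.log x ^ 2 := by nlinarith
    calc _ ≤ 512 * 1 * (1 / 4 : ℝ) := by linarith
      _ ≤ (c + 512) * √x * Real.log x ^ 2 := by gcongr; linarith

end VonKoch

end

/-- Von Koch's theorem: the Riemann hypothesis holds if and only if there exists a constant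
`C > 0` with `|π(x) − Li(x)| ≤ C·√x·log x` for all real `x ≥ 2`. -/
theorem riemannHypothesis_iff_vonKoch :
    RiemannHypothesis ↔
      ∃ C : ℝ, 0 < C ∧ ∀ x : ℝ, 2 ≤ x →
        |primePi x - Li x| ≤ C * Real.sqrt x * Real.log x := by
  exact ⟨fun h => VonKoch.vk_of_psi (VonKoch.psi_of_rh h), fun h => VonKoch.rh_of_psi (VonKoch.psi_of_vk h)⟩
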